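/- arXiv:1503.08467 — 13 statements merged into one kernel-verified Lean document; each statement's English description precedes it below -/
import Mathlib

section
/- A nonempty topological space X is connected if, and only if, X is not the union of a discrete family, having more than one member, of nonempty proper subsets of X. -/
namespace SSG

/-- A family of subsets of a topological space is *discrete* if every point has a
neighborhood meeting at most one member of the family. -/
def IsDiscreteFam {X : Type*} [TopologicalSpace X] (𝒜 : Set (Set X)) : Prop :=
  ∀ x : X, ∃ U ∈ nhds x, {A | A ∈ 𝒜 ∧ (A ∩ U).Nonempty}.Subsingleton

/-- A family of open subsets covering the whole space. -/
def IsOpenCover {X : Type*} [TopologicalSpace X] (𝒰 : Set (Set X)) : Prop :=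
  (∀ U ∈ 𝒰, IsOpen U) ∧ ⋃₀ 𝒰 = Set.univ

/-- A legal move of TWO in the selective strong screenability game, in response to the
open cover `𝒰` played by ONE: a discrete family of open sets, each contained in some
member of `𝒰`. -/
def LegalTwoMove {X : Type*} [TopologicalSpace X] (𝒰 𝒱 : Set (Set X)) : Prop :=
  IsDiscreteFam 𝒱 ∧ ∀ V ∈ 𝒱, IsOpen V ∧ ∃ U ∈ 𝒰, V ⊆ U

/-- ONE has a winning strategy in the game `G^ω_d(𝒪, 𝒪_Y)` on `X`:
there is a strategy `σ` (a function from finite histories of TWO's moves to open covers)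
such that for every play in which TWO moves legally, the union of TWO's families fails
to cover `Y`. -/
def OneWinsGomega (X : Type*) [TopologicalSpace X] (Y : Set X) : Prop :=
  ∃ σ : List (Set (Set X)) → Set (Set X),
    (∀ h : List (Set (Set X)), IsOpenCover (σ h)) ∧
    ∀ V : ℕ → Set (Set X),
      (∀ n : ℕ, LegalTwoMove (σ (List.ofFn fun i : Fin n => V i)) (V n)) →
      ¬ Y ⊆ ⋃ n : ℕ, ⋃₀ V n

/-- TWO has a winning strategy in the game `G^ω_d(𝒪, 𝒪_Y)` on `X`:
a strategy `τ` (from finite histories of ONE's moves, including the current inning's move,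
to TWO's responses) such that against any sequence of open covers played by ONE, all of
TWO's responses are legal and their union covers `Y`. -/
def TwoWinsGomega (X : Type*) [TopologicalSpace X] (Y : Set X) : Prop :=
  ∃ τ : List (Set (Set X)) → Set (Set X),
    ∀ U : ℕ → Set (Set X), (∀ n : ℕ, IsOpenCover (U n)) →
      (∀ n : ℕ, LegalTwoMove (U n) (τ (List.ofFn fun i : Fin (n+1) => U i))) ∧
      Y ⊆ ⋃ n : ℕ, ⋃₀ τ (List.ofFn fun i : Fin (n+1) => U i)

/-- TWO has a winning strategy in the one-inning game `G^1_d(𝒪, 𝒪_Y)` on `X`: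
every open cover of `X` admits a discrete family of open sets, each contained in some
member of the cover, whose union contains `Y`. -/
def TwoWinsGone (X : Type*) [TopologicalSpace X] (Y : Set X) : Prop :=
  ∀ 𝒰 : Set (Set X), IsOpenCover 𝒰 →
    ∃ 𝒱 : Set (Set X), LegalTwoMove 𝒰 𝒱 ∧ Y ⊆ ⋃₀ 𝒱

/-- ONE has a winning strategy in the Banach–Mazur game `MB(Y,X)`: a strategy `σ`
(from finite histories of TWO's moves to ONE's next move) which always produces a legal
move (a nonempty open set contained in TWO's last move) whenever TWO has moved legally
so far, and such that for every play in which TWO moves legally,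
`Y ∩ ⋂ₙ Oₙ` is nonempty. -/
def OneWinsMB (X : Type*) [TopologicalSpace X] (Y : Set X) : Prop :=
  ∃ σ : List (Set X) → Set X,
    (∀ T : ℕ → Set X, ∀ n : ℕ,
      (∀ k : ℕ, k < n → IsOpen (T k) ∧ (T k).Nonempty ∧
          T k ⊆ σ (List.ofFn fun i : Fin k => T i)) →
      IsOpen (σ (List.ofFn fun i : Fin n => T i)) ∧
      (σ (List.ofFn fun i : Fin n => T i)).Nonempty ∧
      ∀ k : ℕ, n = k + 1 → σ (List.ofFn fun i : Fin n => T i) ⊆ T k) ∧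
    ∀ T : ℕ → Set X,
      (∀ n : ℕ, IsOpen (T n) ∧ (T n).Nonempty ∧
          T n ⊆ σ (List.ofFn fun i : Fin n => T i)) →
      (Y ∩ ⋂ n : ℕ, σ (List.ofFn fun i : Fin n => T i)).Nonempty

/-- TWO has a winning strategy in the Banach–Mazur game `MB(Y,X)`: a strategy `τ`
(from finite histories of ONE's moves to TWO's next move) which always produces a legal
move (a nonempty open subset of ONE's last move) whenever ONE has moved legally
so far, and such that for every play in which ONE moves legally,
`Y ∩ ⋂ₙ Oₙ` is empty. -/
def TwoWinsMB (X : Type*) [TopologicalSpace X] (Y : Set X) : Prop :=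
  ∃ τ : List (Set X) → Set X,
    (∀ O : ℕ → Set X, ∀ n : ℕ,
      (∀ k : ℕ, k ≤ n → IsOpen (O k) ∧ (O k).Nonempty ∧
          ∀ j : ℕ, k = j + 1 → O k ⊆ τ (List.ofFn fun i : Fin (j+1) => O i)) →
      IsOpen (τ (List.ofFn fun i : Fin (n+1) => O i)) ∧
      (τ (List.ofFn fun i : Fin (n+1) => O i)).Nonempty ∧
      τ (List.ofFn fun i : Fin (n+1) => O i) ⊆ O n) ∧
    ∀ O : ℕ → Set X,
      (∀ n : ℕ, IsOpen (O n) ∧ (O n).Nonempty ∧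
          ∀ j : ℕ, n = j + 1 → O n ⊆ τ (List.ofFn fun i : Fin (j+1) => O i)) →
      Y ∩ ⋂ n : ℕ, O n = ∅

/-- A space is ultraparacompact if every open cover has a refinement by pairwise
disjoint open sets still covering the space. -/
def Ultraparacompact (X : Type*) [TopologicalSpace X] : Prop :=
  ∀ 𝒰 : Set (Set X), IsOpenCover 𝒰 →
    ∃ 𝒱 : Set (Set X), (∀ V ∈ 𝒱, IsOpen V ∧ ∃ U ∈ 𝒰, V ⊆ U) ∧
      𝒱.Pairwise Disjoint ∧ ⋃₀ 𝒱 = Set.univ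

/-- A space is zero-dimensional if every point has a neighborhood basis of clopen sets. -/
def ZeroDimensional (X : Type*) [TopologicalSpace X] : Prop :=
  ∀ (x : X) (U : Set X), IsOpen U → x ∈ U → ∃ V : Set X, IsClopen V ∧ x ∈ V ∧ V ⊆ U

/-- A space is strongly zero-dimensional if every *finite* open cover has a refinement
by pairwise disjoint open sets still covering the space. -/
def StronglyZeroDim (X : Type*) [TopologicalSpace X] : Prop :=
  ∀ 𝒰 : Set (Set X), 𝒰.Finite → IsOpenCover 𝒰 →
    ∃ 𝒱 : Set (Set X), (∀ V ∈ 𝒱, IsOpen V ∧ ∃ U ∈ 𝒰, V ⊆ U) ∧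
      𝒱.Pairwise Disjoint ∧ ⋃₀ 𝒱 = Set.univ

/-- `X` has a π-base consisting of nontrivial connected (open) sets. -/
def HasConnectedPiBase (X : Type*) [TopologicalSpace X] : Prop :=
  ∃ P : Set (Set X), (∀ B ∈ P, IsOpen B ∧ IsConnected B ∧ B.Nontrivial) ∧
    ∀ U : Set X, IsOpen U → U.Nonempty → ∃ B ∈ P, B ⊆ U

/-- A nonempty space is connected iff it is not the union of a discrete
family, having more than one member, of nonempty proper subsets. -/
theorem statement1 {X : Type*} [TopologicalSpace X] [Nonempty X] :
    ConnectedSpace X ↔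
      ¬ ∃ 𝒜 : Set (Set X), IsDiscreteFam 𝒜 ∧ 𝒜.Nontrivial ∧
        (∀ A ∈ 𝒜, A.Nonempty ∧ A ≠ Set.univ) ∧ ⋃₀ 𝒜 = Set.univ := by
  constructor
  · rintro hX ⟨𝒜, hd, hn, hA, hc⟩
    obtain ⟨A, hA𝒜⟩ := hn.nonempty
    have key : ∀ x : X, ∃ U ∈ nhds x, (x ∈ A → U ⊆ A) ∧ (x ∉ A → U ⊆ Aᶜ) := by
      intro x
      obtain ⟨U, hU, hs⟩ := hd x
      have hxU : x ∈ U := mem_of_mem_nhds hU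
      refine ⟨U, hU, ?_, ?_⟩
      · intro hx y hy
        obtain ⟨B, hB, hyB⟩ : y ∈ ⋃₀ 𝒜 := hc ▸ Set.mem_univ y
        have h : B = A := hs ⟨hB, y, hyB, hy⟩ ⟨hA𝒜, x, hx, hxU⟩
        exact h ▸ hyB
      · intro hx y hy hyA
        obtain ⟨B, hB, hxB⟩ : x ∈ ⋃₀ 𝒜 := hc ▸ Set.mem_univ x
        have h : B = A := hs ⟨hB, x, hxB, hxU⟩ ⟨hA𝒜, y, hyA, hy⟩
        exact hx (h ▸ hxB)
    have hcl : IsClopen A := by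
      refine ⟨⟨?_⟩, ?_⟩
      · rw [isOpen_iff_mem_nhds]
        intro x hx
        obtain ⟨U, hU, -, h⟩ := key x
        exact Filter.mem_of_superset hU (h hx)
      · rw [isOpen_iff_mem_nhds]
        intro x hx
        obtain ⟨U, hU, h, -⟩ := key x
        exact Filter.mem_of_superset hU (h hx)
    rcases isClopen_iff.1 hcl with h | h
    · exact (hA A hA𝒜).1.ne_empty h
    · exact (hA A hA𝒜).2 h
  · intro h
    have hp : PreconnectedSpace X := by
      rw [preconnectedSpace_iff_clopen]
      intro s hs
      by_contra hne
      push Not at hne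
      obtain ⟨h1, h2⟩ := hne
      have hc2 : sᶜ.Nonempty := Set.nonempty_compl.2 h2
      have hc3 : sᶜ ≠ Set.univ := fun e => h1.ne_empty (Set.compl_univ_iff.1 e)
      refine h ⟨{s, sᶜ}, ?_, ?_, ?_, ?_⟩
      · intro x
        by_cases hx : x ∈ s
        · refine ⟨s, hs.isOpen.mem_nhds hx, ?_⟩
          have aux : ∀ A, A ∈ ({s, sᶜ} : Set (Set X)) ∧ (A ∩ s).Nonempty → A = s := by
            rintro A ⟨rfl | rfl, y, hy, hy'⟩
            · rfl
            · exact absurd hy' hy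
          intro A hA B hB
          rw [aux A hA, aux B hB]
        · refine ⟨sᶜ, hs.compl.isOpen.mem_nhds hx, ?_⟩
          have aux : ∀ A, A ∈ ({s, sᶜ} : Set (Set X)) ∧ (A ∩ sᶜ).Nonempty → A = sᶜ := by
            rintro A ⟨rfl | rfl, y, hy, hy'⟩
            · exact absurd hy hy'
            · rfl
          intro A hA B hB
          rw [aux A hA, aux B hB]
      · refine Set.nontrivial_pair ?_
        intro e
        obtain ⟨y, hy⟩ := h1
        exact (e ▸ hy : y ∈ sᶜ) hy
      · rintro A (rfl | rfl)
        · exact ⟨h1, h2⟩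
        · exact ⟨hc2, hc3⟩
      · rw [Set.sUnion_pair, Set.union_compl_self]
    exact { toPreconnectedSpace := hp, toNonempty := inferInstance }

end SSG
end

section
/- Player ONE has a winning strategy in the game G^ω_d(𝒪,𝒪_ℙ) on the real line ℝ, where ℙ is the set of irrational numbers. -/
namespace SSG

/-- ONE's cover attached to the interval `(a, b)`: all balls of radius `(b - a) / 4`
(or radius `1` if the interval is degenerate). -/
noncomputable def coverOf (s : ℝ × ℝ × ℕ) : Set (Set ℝ) :=
  Set.range fun z : ℝ => Metric.ball z (if s.1 < s.2.1 then (s.2.1 - s.1) / 4 else 1)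

theorem coverOf_isOpenCover (s : ℝ × ℝ × ℕ) : IsOpenCover (coverOf s) := by
  refine ⟨?_, ?_⟩
  · rintro U ⟨z, rfl⟩
    exact Metric.isOpen_ball
  · refine Set.eq_univ_of_forall fun x => ⟨_, ⟨x, rfl⟩, ?_⟩
    apply Metric.mem_ball_self
    split_ifs with h
    · linarith
    · norm_num

theorem key {a b : ℝ} (n : ℕ) (hab : a < b) {V : Set (Set ℝ)}
    (hV : LegalTwoMove (coverOf (a, b, n)) V) (q : ℝ) :
    ∃ p : ℝ × ℝ, a < p.1 ∧ p.1 < p.2 ∧ p.2 < b ∧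
      ∀ x ∈ Set.Icc p.1 p.2, x ∉ ⋃₀ V ∧ x ≠ q := by
  have h1 : ¬ Set.Ioo a b ⊆ closure (⋃₀ V) := by
    intro hsub
    have hmem : ∀ x ∈ Set.Ioo a b, ∃ A ∈ V, x ∈ closure A ∧
        ∃ U, IsOpen U ∧ x ∈ U ∧ U ∩ ⋃₀ V ⊆ A := by
      intro x hx
      obtain ⟨U, hU, hs⟩ := hV.1 x
      obtain ⟨U', hU'U, hU'o, hxU'⟩ := mem_nhds_iff.1 hU
      obtain ⟨y, hyU, A, hA, hyA⟩ := mem_closure_iff.1 (hsub hx) U' hU'o hxU'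
      have hUA : U' ∩ ⋃₀ V ⊆ A := by
        rintro z ⟨hz, B, hB, hzB⟩
        have : B = A := hs ⟨hB, z, hzB, hU'U hz⟩ ⟨hA, y, hyA, hU'U hyU⟩
        exact this ▸ hzB
      refine ⟨A, hA, ?_, U', hU'o, hxU', hUA⟩
      rw [mem_closure_iff]
      intro O hO hxO
      obtain ⟨w, hw, hwV⟩ := mem_closure_iff.1 (hsub hx) (O ∩ U') (hO.inter hU'o) ⟨hxO, hxU'⟩
      exact ⟨w, hw.1, hUA ⟨hw.2, hwV⟩⟩
    have hm : (a + b) / 2 ∈ Set.Ioo a b := ⟨by linarith, by linarith⟩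
    obtain ⟨A, hA, hmA, U₀, hU₀, hmU₀, hU₀A⟩ := hmem _ hm
    let u : Set ℝ := ⋃₀ {U | IsOpen U ∧ U ∩ ⋃₀ V ⊆ A}
    have hu : IsOpen u := isOpen_sUnion fun U hU => hU.1
    have hcl : Set.Ioo a b ⊆ closure A := by
      by_contra hne
      obtain ⟨y, hy, hyA⟩ := Set.not_subset.1 hne
      obtain ⟨z, hz, ⟨U, ⟨hUo, hUA⟩, hzU⟩, hzA⟩ :=
        (isPreconnected_Ioo : IsPreconnected (Set.Ioo a b)) u (closure A)ᶜ hu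
          isClosed_closure.isOpen_compl (by
            intro x hx
            by_cases hxA : x ∈ closure A
            · left
              obtain ⟨B, hB, hxB, U, hUo, hxU, hUB⟩ := hmem x hx
              obtain ⟨w, hwU, hwA⟩ := mem_closure_iff.1 hxA U hUo hxU
              have hwB : w ∈ B := hUB ⟨hwU, A, hA, hwA⟩
              obtain ⟨N, hN, hs⟩ := hV.1 x
              obtain ⟨N', hN'N, hN'o, hxN'⟩ := mem_nhds_iff.1 hN
              obtain ⟨v, hvN, hvA⟩ := mem_closure_iff.1 hxA N' hN'o hxN'
              obtain ⟨v', hvN', hvB⟩ := mem_closure_iff.1 hxB N' hN'o hxN'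
              have : B = A := hs ⟨hB, v', hvB, hN'N hvN'⟩ ⟨hA, v, hvA, hN'N hvN⟩
              exact ⟨U, ⟨hUo, this ▸ hUB⟩, hxU⟩
            · right
              exact hxA)
          ⟨_, hm, U₀, ⟨hU₀, hU₀A⟩, hmU₀⟩ ⟨y, hy, hyA⟩
      apply hzA
      rw [mem_closure_iff]
      intro O hO hzO
      obtain ⟨w, hw, hwV⟩ := mem_closure_iff.1 (hsub hz) (O ∩ U) (hO.inter hUo) ⟨hzO, hzU⟩
      exact ⟨w, hw.1, hUA ⟨hw.2, hwV⟩⟩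
    obtain ⟨_, _, ⟨z, rfl⟩, hAz⟩ := hV.2 A hA
    simp only [hab, if_true] at hAz
    have hcb : closure A ⊆ Metric.closedBall z ((b - a) / 4) :=
      closure_minimal (hAz.trans Metric.ball_subset_closedBall) Metric.isClosed_closedBall
    have e1 := hcb (hcl (⟨by linarith, by linarith⟩ : a + (b - a) / 8 ∈ Set.Ioo a b))
    have e2 := hcb (hcl (⟨by linarith, by linarith⟩ : b - (b - a) / 8 ∈ Set.Ioo a b))
    rw [Metric.mem_closedBall, Real.dist_eq, abs_le] at e1 e2
    linarith [e1.1, e2.2]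
  obtain ⟨y, hy, hyV⟩ := Set.not_subset.1 h1
  have hWo : IsOpen (Set.Ioo a b ∩ (closure (⋃₀ V))ᶜ) :=
    isOpen_Ioo.inter isClosed_closure.isOpen_compl
  obtain ⟨w, hwW, hwq⟩ := (dense_compl_singleton q).inter_open_nonempty _ hWo ⟨y, hy, hyV⟩
  obtain ⟨ε, hε, hball⟩ := Metric.isOpen_iff.1 (hWo.inter (isOpen_compl_singleton (x := q))) w
    ⟨hwW, hwq⟩
  have hin : ∀ x ∈ Set.Icc (w - ε / 2) (w + ε / 2),
      x ∈ (Set.Ioo a b ∩ (closure (⋃₀ V))ᶜ) ∩ {q}ᶜ := by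
    intro x hx
    apply hball
    rw [Metric.mem_ball, Real.dist_eq, abs_lt]
    constructor <;> linarith [hx.1, hx.2]
  refine ⟨(w - ε / 2, w + ε / 2), ?_, ?_, ?_, ?_⟩
  · exact (hin (w - ε / 2) ⟨le_rfl, by linarith⟩).1.1.1
  · show w - ε / 2 < w + ε / 2
    linarith
  · exact (hin (w + ε / 2) ⟨by linarith, le_rfl⟩).1.1.2
  · intro x hx
    exact ⟨fun h => (hin x hx).1.2 (subset_closure h), (hin x hx).2⟩

open Classical in
/-- Passing to a smaller interval which avoids TWO's last move and one more rational. -/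
noncomputable def step (r : ℕ → ℚ) (s : ℝ × ℝ × ℕ) (V : Set (Set ℝ)) : ℝ × ℝ × ℕ :=
  if h : ∃ p : ℝ × ℝ, s.1 < p.1 ∧ p.1 < p.2 ∧ p.2 < s.2.1 ∧
      ∀ x ∈ Set.Icc p.1 p.2, x ∉ ⋃₀ V ∧ x ≠ (r s.2.2 : ℝ) then
    (h.choose.1, h.choose.2, s.2.2 + 1)
  else s

/-- ONE has a winning strategy in `G^ω_d(𝒪,𝒪_ℙ)` on the real line, where
`ℙ` is the set of irrational numbers. -/
theorem statement5 : OneWinsGomega ℝ {x : ℝ | Irrational x} := by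
  obtain ⟨r, hr⟩ := exists_surjective_nat ℚ
  refine ⟨fun h => coverOf (h.foldl (step r) (0, 1, 0)), fun h => coverOf_isOpenCover _, ?_⟩
  intro V hV hcov
  let S : ℕ → ℝ × ℝ × ℕ := fun n =>
    (List.ofFn fun i : Fin n => V i).foldl (step r) (0, 1, 0)
  have hS0 : S 0 = (0, 1, 0) := by simp [S]
  have hSs : ∀ n, S (n + 1) = step r (S n) (V n) := by
    intro n
    simp only [S]
    rw [List.ofFn_succ', List.concat_eq_append, List.foldl_append]
    rfl
  have hlegal : ∀ n, LegalTwoMove (coverOf (S n)) (V n) := hV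
  have hstep : ∀ n, (S n).1 < (S n).2.1 →
      (S n).1 < (S (n + 1)).1 ∧ (S (n + 1)).1 < (S (n + 1)).2.1 ∧
      (S (n + 1)).2.1 < (S n).2.1 ∧ (S (n + 1)).2.2 = (S n).2.2 + 1 ∧
      ∀ x ∈ Set.Icc (S (n + 1)).1 (S (n + 1)).2.1,
        x ∉ ⋃₀ V n ∧ x ≠ (r (S n).2.2 : ℝ) := by
    intro n hn
    have h := key (S n).2.2 hn (hlegal n) (r (S n).2.2 : ℝ)
    have e : S (n + 1) = (h.choose.1, h.choose.2, (S n).2.2 + 1) := by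
      rw [hSs, step, dif_pos h]
    have hc := h.choose_spec
    rw [e]
    exact ⟨hc.1, hc.2.1, hc.2.2.1, rfl, hc.2.2.2⟩
  have hlt : ∀ n, (S n).1 < (S n).2.1 ∧ (S n).2.2 = n := by
    intro n
    induction n with
    | zero => simp [hS0]
    | succ k ih =>
      have := hstep k ih.1
      exact ⟨this.2.1, by rw [this.2.2.2.1, ih.2]⟩
  have hanti : Antitone fun n => Set.Icc (S n).1 (S n).2.1 := by
    refine antitone_nat_of_succ_le fun n => ?_
    have := hstep n (hlt n).1
    exact Set.Icc_subset_Icc this.1.le this.2.2.1.le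
  have hx := ciSup_mem_iInter_Icc_of_antitone_Icc hanti fun n => (hlt n).1.le
  rw [Set.mem_iInter] at hx
  have hall : ∀ n, _ := fun n => (hstep n (hlt n).1).2.2.2.2 _ (hx (n + 1))
  have hirr : Irrational (⨆ n, (S n).1) := by
    rintro ⟨t, ht⟩
    obtain ⟨n, rfl⟩ := hr t
    apply (hall n).2
    rw [(hlt n).2, ht]
  obtain ⟨n, hn⟩ := Set.mem_iUnion.1 (hcov hirr)
  exact (hall n).1 hn

end SSG
end

section
/- Let Y be a dense Gδ subset of a topological space X. Then player ONE has a winning strategy in the Banach–Mazur game MB(X) if, and only if, ONE has a winning strategy in the Banach–Mazur game MB(Y,X). -/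
namespace SSG

/-- If `Y` is a dense Gδ subset of `X`, then ONE has a winning strategy in
`MB(X)` iff ONE has a winning strategy in `MB(Y,X)`. -/
theorem statement6 {X : Type*} [TopologicalSpace X] (Y : Set X)
    (hdense : Dense Y) (hGδ : IsGδ Y) :
    OneWinsMB X Set.univ ↔ OneWinsMB X Y := by
  constructor
  · rintro ⟨σ, h1, h2⟩
    obtain ⟨U, hUo, hU⟩ := isGδ_iff_eq_iInter_nat.mp hGδ
    have hUd : ∀ n, Dense (U n) := fun n =>
      hdense.mono (by rw [hU]; exact Set.iInter_subset U n)
    have key : ∀ (T : ℕ → Set X) (n : ℕ),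
        (List.ofFn fun i : Fin n => T i).mapIdx (fun i t => t ∩ U i)
          = List.ofFn fun i : Fin n => (fun m => T m ∩ U m) i := by
      intro T n
      apply List.ext_getElem
      · simp
      · intro i hi hi'
        simp
    have leg : ∀ (T : ℕ → Set X) (k : ℕ) (A : Set X),
        IsOpen (T k) ∧ (T k).Nonempty ∧ T k ⊆ A →
        IsOpen (T k ∩ U k) ∧ (T k ∩ U k).Nonempty ∧ T k ∩ U k ⊆ A := by
      rintro T k A ⟨ho, hn, hs⟩
      exact ⟨ho.inter (hUo k), (hUd k).inter_open_nonempty _ ho hn,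
        Set.inter_subset_left.trans hs⟩
    refine ⟨fun h => σ (h.mapIdx fun i t => t ∩ U i), ?_, ?_⟩
    · intro T n hT
      simp only [key] at hT ⊢
      obtain ⟨a, b, c⟩ := h1 (fun m => T m ∩ U m) n (fun k hk => leg T k _ (hT k hk))
      exact ⟨a, b, fun k hk => (c k hk).trans Set.inter_subset_left⟩
    · intro T hT
      simp only [key] at hT ⊢
      have hl := fun k => leg T k _ (hT k)
      obtain ⟨x, -, hx⟩ := h2 (fun m => T m ∩ U m) hl
      refine ⟨x, ?_, hx⟩
      rw [hU]
      refine Set.mem_iInter.mpr fun n => ?_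
      have := (h1 (fun m => T m ∩ U m) (n + 1) (fun k _ => hl k)).2.2 n rfl
      exact (this (Set.mem_iInter.mp hx (n + 1))).2
  · rintro ⟨σ, h1, h2⟩
    refine ⟨σ, h1, fun T hT => ?_⟩
    obtain ⟨x, -, hx⟩ := h2 T hT
    exact ⟨x, trivial, hx⟩

end SSG
end

section
/- For a topological space X the following are equivalent: (1) X is ultraparacompact; (2) player TWO has a winning strategy in the game G^1_d(𝒪,𝒪) on X, i.e., every open cover 𝒰 of X admits a discrete family of open sets, each contained in some member of 𝒰, whose union is X. -/
namespace SSG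

/-- A space is ultraparacompact iff TWO has a winning strategy in the
one-inning game `G^1_d(𝒪,𝒪)`. -/
theorem statement7 {X : Type*} [TopologicalSpace X] :
    Ultraparacompact X ↔ TwoWinsGone X Set.univ := by
  constructor
  · intro h 𝒰 h𝒰
    obtain ⟨𝒱, h1, h2, h3⟩ := h 𝒰 h𝒰
    refine ⟨𝒱, ⟨?_, h1⟩, h3.ge⟩
    intro x
    obtain ⟨V, hV, hx⟩ : x ∈ ⋃₀ 𝒱 := h3 ▸ Set.mem_univ x
    refine ⟨V, (h1 V hV).1.mem_nhds hx, ?_⟩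
    have key : ∀ A ∈ 𝒱, (A ∩ V).Nonempty → A = V := by
      intro A hA hn
      by_contra hne
      exact Set.not_disjoint_iff_nonempty_inter.2 hn (h2 hA hV hne)
    rintro A ⟨hA, hAn⟩ B ⟨hB, hBn⟩
    exact (key A hA hAn).trans (key B hB hBn).symm
  · intro h 𝒰 h𝒰
    obtain ⟨𝒱, ⟨hd, h1⟩, h3⟩ := h 𝒰 h𝒰
    refine ⟨𝒱, h1, ?_, Set.univ_subset_iff.1 h3⟩
    intro A hA B hB hne
    rw [Set.disjoint_left]
    intro x hxA hxB
    obtain ⟨U, hU, hs⟩ := hd x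
    have hxU := mem_of_mem_nhds hU
    exact hne (hs ⟨hA, x, hxA, hxU⟩ ⟨hB, x, hxB, hxU⟩)


end SSG
end

section
/- For a Lindelöf T1 space X the following are equivalent: (1) X is zero-dimensional; (2) player TWO has a winning strategy in the game G^1_d(𝒪,𝒪) on X, i.e., every open cover 𝒰 of X admits a discrete family of open sets, each contained in some member of 𝒰, whose union is X. -/
namespace SSG

/-- A Lindelöf T1 space is zero-dimensional iff TWO has a winning strategy
in the one-inning game `G^1_d(𝒪,𝒪)`. -/
theorem statement8 {X : Type*} [TopologicalSpace X] [LindelofSpace X] [T1Space X] :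
    ZeroDimensional X ↔ TwoWinsGone X Set.univ := by
  constructor
  · intro hZ 𝒰 h𝒰
    have h1 : ∀ x : X, ∃ V : Set X, IsClopen V ∧ x ∈ V ∧ ∃ U ∈ 𝒰, V ⊆ U := by
      intro x
      have hx : x ∈ ⋃₀ 𝒰 := by rw [h𝒰.2]; trivial
      obtain ⟨U, hU, hxU⟩ := hx
      obtain ⟨V, hV, hxV, hVU⟩ := hZ x U (h𝒰.1 U hU) hxU
      exact ⟨V, hV, hxV, U, hU, hVU⟩
    choose V hV hxV hVU using h1
    rcases isEmpty_or_nonempty X with hE | hE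
    · exact ⟨∅, ⟨fun x => (hE.false x).elim, fun V hV => hV.elim⟩,
        fun x => (hE.false x).elim⟩
    obtain ⟨t, htc, ht⟩ := LindelofSpace.elim_nhds_subcover V
      (fun x => (hV x).isOpen.mem_nhds (hxV x))
    have htne : t.Nonempty := by
      obtain ⟨x⟩ := hE
      have hx : x ∈ ⋃ y ∈ t, V y := by rw [ht]; trivial
      simp only [Set.mem_iUnion] at hx
      obtain ⟨y, hy, _⟩ := hx
      exact ⟨y, hy⟩
    obtain ⟨f, rfl⟩ := htc.exists_eq_range htne
    let W : ℕ → Set X := fun n => V (f n) \ ⋃ m ∈ Finset.range n, V (f m)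
    have hWo : ∀ n, IsOpen (W n) := fun n =>
      (hV _).isOpen.sdiff (isClosed_biUnion_finset fun m _ => (hV _).isClosed)
    have hWc : ∀ x : X, ∃ n, x ∈ W n := by
      intro x
      have hx : ∃ n, x ∈ V (f n) := by
        have hx : x ∈ ⋃ y ∈ Set.range f, V y := by rw [ht]; trivial
        simpa using hx
      classical
      refine ⟨Nat.find hx, Nat.find_spec hx, ?_⟩
      simp only [Set.mem_iUnion, Finset.mem_range, not_exists]
      intro m hm
      exact Nat.find_min hx hm
    have hlt : ∀ m n x, m < n → x ∈ W m → x ∈ W n → False := by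
      intro m n x hmn hm hn
      apply hn.2
      simp only [Set.mem_iUnion, Finset.mem_range]
      exact ⟨m, hmn, hm.1⟩
    have hdis : ∀ m n x, x ∈ W m → x ∈ W n → m = n := by
      intro m n x hm hn
      rcases lt_trichotomy m n with h | h | h
      · exact (hlt m n x h hm hn).elim
      · exact h
      · exact (hlt n m x h hn hm).elim
    refine ⟨Set.range W, ⟨?_, ?_⟩, ?_⟩
    · intro x
      obtain ⟨n, hn⟩ := hWc x
      refine ⟨W n, (hWo n).mem_nhds hn, ?_⟩
      rintro _ ⟨⟨a, rfl⟩, y, hya, hyn⟩ _ ⟨⟨b, rfl⟩, z, hzb, hzn⟩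
      rw [hdis a n y hya hyn, hdis b n z hzb hzn]
    · rintro _ ⟨n, rfl⟩
      obtain ⟨U, hU, h⟩ := hVU (f n)
      exact ⟨hWo n, U, hU, fun x hx => h hx.1⟩
    · intro x _
      obtain ⟨n, hn⟩ := hWc x
      exact ⟨W n, ⟨n, rfl⟩, hn⟩
  · intro h x U hU hxU
    obtain ⟨𝒱, ⟨hd, hV⟩, hcov⟩ := h {U, {x}ᶜ} (by
      refine ⟨?_, ?_⟩
      · rintro A (rfl | rfl)
        · exact hU
        · exact isOpen_compl_singleton
      · ext y
        simp only [Set.sUnion_insert, Set.sUnion_singleton, Set.mem_union, Set.mem_univ, iff_true]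
        by_cases hy : y = x
        · left; rwa [hy]
        · right; exact hy)
    obtain ⟨V, hVm, hxV⟩ := hcov (Set.mem_univ x)
    refine ⟨V, ⟨⟨?_⟩, (hV V hVm).1⟩, hxV, ?_⟩
    · rw [isOpen_iff_mem_nhds]
      intro y hy
      obtain ⟨N, hN, hs⟩ := hd y
      filter_upwards [hN] with z hz hzV
      obtain ⟨B, hB, hyB⟩ := hcov (Set.mem_univ y)
      have : V = B := hs ⟨hVm, z, hzV, hz⟩ ⟨hB, y, hyB, mem_of_mem_nhds hN⟩
      exact hy (this ▸ hyB)
    · obtain ⟨_, A, (rfl | rfl), hA⟩ := hV V hVm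
      · exact hA
      · exact (hA hxV rfl).elim

end SSG
end

section
/- Let X be a metric space and let Y be a closed subspace of X that is ultraparacompact in its subspace topology. Then player TWO has a winning strategy in the game G^1_d(𝒪,𝒪_Y) on X, i.e., for every open cover 𝒰 of X there is a discrete family of open subsets of X, each contained in some member of 𝒰, whose union contains Y. -/
namespace SSG

/-- If `X` is a metric space and `Y ⊆ X` is closed and ultraparacompact in
its subspace topology, then TWO has a winning strategy in `G^1_d(𝒪,𝒪_Y)` on `X`. -/
theorem statement9 {X : Type*} [MetricSpace X] (Y : Set X) (hYclosed : IsClosed Y)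
    (hY : Ultraparacompact ↥Y) :
    TwoWinsGone X Y := by
  rintro 𝒰 ⟨hUo, hUc⟩
  obtain ⟨𝒱, hV, hdisj, hcov⟩ := hY ((fun U => (Subtype.val ⁻¹' U : Set Y)) '' 𝒰) (by
    refine ⟨?_, ?_⟩
    · rintro _ ⟨U, hU, rfl⟩
      exact (hUo U hU).preimage continuous_subtype_val
    · refine Set.eq_univ_of_forall fun y => ?_
      have hy : (y : X) ∈ ⋃₀ 𝒰 := by rw [hUc]; trivial
      obtain ⟨U, hU, hyU⟩ := hy
      exact ⟨_, ⟨U, hU, rfl⟩, hyU⟩)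
  have h1 : ∀ y : Y, ∃ V ∈ 𝒱, y ∈ V := fun y => by
    have hy : y ∈ ⋃₀ 𝒱 := by rw [hcov]; trivial
    exact hy
  choose v hv𝒱 hyv using h1
  have h2 : ∀ V : Set Y, ∃ U : Set X, V ∈ 𝒱 → U ∈ 𝒰 ∧ V ⊆ Subtype.val ⁻¹' U := fun V => by
    by_cases h : V ∈ 𝒱
    · obtain ⟨-, _, ⟨U, hU, rfl⟩, hVU⟩ := hV V h
      exact ⟨U, fun _ => ⟨hU, hVU⟩⟩
    · exact ⟨∅, fun h' => absurd h' h⟩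
  choose u hu using h2
  have huniq : ∀ y y' : Y, y' ∈ v y → v y' = v y := fun y y' h => by
    by_contra hne
    exact Set.disjoint_left.1 (hdisj (hv𝒱 y') (hv𝒱 y) hne) (hyv y') h
  have h3 : ∀ y : Y, ∃ r : ℝ, 0 < r ∧ (∀ y' : Y, dist (y : X) y' < r → v y' = v y) ∧
      Metric.ball (y : X) r ⊆ u (v y) := fun y => by
    obtain ⟨r1, hr1, hb1⟩ := Metric.isOpen_iff.1 (hV _ (hv𝒱 y)).1 y (hyv y)
    have hh := hu _ (hv𝒱 y)
    obtain ⟨r2, hr2, hb2⟩ := Metric.isOpen_iff.1 (hUo _ hh.1) y (hh.2 (hyv y))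
    refine ⟨min r1 r2, lt_min hr1 hr2, fun y' h => huniq _ _ (hb1 ?_),
      (Metric.ball_subset_ball (min_le_right _ _)).trans hb2⟩
    rw [Metric.mem_ball, dist_comm]
    exact h.trans_le (min_le_left _ _)
  choose r hr hrv hru using h3
  have key : ∀ y y' : Y, dist (y : X) y' < max (r y) (r y') → v y = v y' := fun y y' h => by
    rcases lt_max_iff.1 h with h | h
    · exact (hrv y y' h).symm
    · exact hrv y' y (by rwa [dist_comm])
  let W : Set Y → Set X := fun V => ⋃ y : {y : Y // v y = V}, Metric.ball (y.1 : X) (r y.1 / 4)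
  refine ⟨W '' 𝒱, ⟨?_, ?_⟩, ?_⟩
  · intro x
    suffices hs : ∃ δ > 0, ∀ (y y' : Y) (z z' : X), dist z y < r y / 4 → dist z' y' < r y' / 4 →
        dist z x < δ → dist z' x < δ → v y = v y' by
      obtain ⟨δ, hδ, hs⟩ := hs
      refine ⟨Metric.ball x δ, Metric.ball_mem_nhds x hδ, ?_⟩
      rintro _ ⟨⟨V, -, rfl⟩, z, hz, hzx⟩ _ ⟨⟨V', -, rfl⟩, z', hz', hzx'⟩
      obtain ⟨⟨y, rfl⟩, hy⟩ := Set.mem_iUnion.1 hz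
      obtain ⟨⟨y', rfl⟩, hy'⟩ := Set.mem_iUnion.1 hz'
      rw [hs y y' z z' hy hy' hzx hzx']
    by_cases hx : x ∈ Y
    · refine ⟨r ⟨x, hx⟩ / 4, by linarith [hr ⟨x, hx⟩], fun y y' z z' h h' k k' => ?_⟩
      have aux : ∀ (y : Y) (z : X), dist z y < r y / 4 → dist z x < r ⟨x, hx⟩ / 4 →
          v y = v ⟨x, hx⟩ := fun y z h k => by
        apply key
        have h4 := dist_triangle_left (y : X) x z
        have h5 := le_max_left (r y) (r ⟨x, hx⟩)
        have h6 := le_max_right (r y) (r ⟨x, hx⟩)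
        have h7 := hr y
        show dist (y : X) x < _
        linarith
      rw [aux y z h k, aux y' z' h' k']
    · obtain ⟨δ, hδ, hb⟩ := Metric.isOpen_iff.1 hYclosed.isOpen_compl x hx
      refine ⟨δ / 4, by linarith, fun y y' z z' h h' k k' => key _ _ ?_⟩
      have h1 : δ ≤ dist (y : X) x := not_lt.1 fun hlt => hb hlt y.2
      have h4 := dist_triangle_left (y : X) x z
      have h5 := le_max_left (r y) (r y')
      have h6 := le_max_right (r y) (r y')
      have h7 := dist_triangle4 (y : X) z z' y'
      have h8 := dist_triangle_right z z' x
      rw [dist_comm (y : X) z] at h7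
      linarith
  · rintro _ ⟨V, hVV, rfl⟩
    refine ⟨isOpen_iUnion fun _ => Metric.isOpen_ball, u V, (hu V hVV).1, ?_⟩
    refine Set.iUnion_subset ?_
    rintro ⟨y, rfl⟩
    exact (Metric.ball_subset_ball (by linarith [hr y])).trans (hru y)
  · intro x hx
    refine ⟨W (v ⟨x, hx⟩), ⟨_, hv𝒱 _, rfl⟩, Set.mem_iUnion.2 ⟨⟨⟨x, hx⟩, rfl⟩, ?_⟩⟩
    exact Metric.mem_ball_self (by linarith [hr ⟨x, hx⟩])

end SSG
end

section
/- Let X be a metric space and let Y be a subset of a σ-compact zero-dimensional subset of X. Then player TWO has a winning strategy in the game G^ω_d(𝒪,𝒪_Y) on X. -/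
namespace SSG

theorem compact_move {X : Type*} [MetricSpace X] (K C : Set X) (hKC : K ⊆ C)
    (hK : IsCompact K) (hzd : ZeroDimensional ↥C) (𝒰 : Set (Set X)) (h𝒰 : IsOpenCover 𝒰) :
    ∃ 𝒱 : Set (Set X), LegalTwoMove 𝒰 𝒱 ∧ K ⊆ ⋃₀ 𝒱 := by
  classical
  have hc : CompactSpace K := isCompact_iff_compactSpace.mp hK
  have h1 : ∀ x : K, ∃ V : Set K, IsClopen V ∧ x ∈ V ∧ ∃ U ∈ 𝒰, V ⊆ Subtype.val ⁻¹' U := by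
    intro x
    have hx : (x : X) ∈ ⋃₀ 𝒰 := by rw [h𝒰.2]; trivial
    obtain ⟨U, hU, hxU⟩ := hx
    obtain ⟨V, hV, hxV, hVU⟩ := hzd (Set.inclusion hKC x) (Subtype.val ⁻¹' U)
      ((h𝒰.1 U hU).preimage continuous_subtype_val) hxU
    exact ⟨Set.inclusion hKC ⁻¹' V, hV.preimage (continuous_inclusion hKC), hxV, U, hU,
      fun y hy => hVU hy⟩
  choose V hV hxV U hU hVU using h1
  obtain ⟨t, ht⟩ := isCompact_univ.elim_finite_subcover V (fun i => (hV i).isOpen)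
    (fun x _ => Set.mem_iUnion.2 ⟨x, hxV x⟩)
  let f : K → Set K := fun y => {i | i ∈ t ∧ y ∈ V i}
  have hfo : ∀ s, IsOpen (f ⁻¹' {s}) := by
    intro s
    rw [isOpen_iff_mem_nhds]
    intro y hy
    have h2 : ∀ᶠ z in nhds y, ∀ i ∈ t, (z ∈ V i ↔ y ∈ V i) := by
      rw [Filter.eventually_all_finset]
      intro i _
      by_cases hyi : y ∈ V i
      · filter_upwards [(hV i).isOpen.mem_nhds hyi] with z hz
        simp [hz, hyi]
      · filter_upwards [(hV i).compl.isOpen.mem_nhds hyi] with z hz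
        have hz' : z ∉ V i := hz
        simp [hz', hyi]
    filter_upwards [h2] with z hz
    have hy' : f y = s := hy
    change f z = s
    rw [← hy']
    ext i
    exact and_congr_right (fun hi => hz i hi)
  obtain ⟨ε, hε, hεf⟩ := lebesgue_number_lemma_of_metric (isCompact_univ (X := K)) hfo
    (fun x _ => Set.mem_iUnion.2 ⟨f x, rfl⟩)
  have hf : ∀ x y : K, dist x y < ε → f x = f y := by
    intro x y hxy
    obtain ⟨s, hs⟩ := hεf x trivial
    have a : f x = s := hs (Metric.mem_ball_self hε)
    have b : f y = s := hs (by rwa [Metric.mem_ball, dist_comm])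
    rw [a, b]
  have h3 : ∀ s : Set.range f, ∃ r : ℝ, 0 < r ∧ r ≤ ε / 4 ∧ ∃ W ∈ 𝒰,
      Metric.thickening r (Subtype.val '' (f ⁻¹' {s.1})) ⊆ W := by
    rintro ⟨_, x, rfl⟩
    obtain ⟨i, hi, hxi⟩ := Set.mem_iUnion₂.1 (ht (Set.mem_univ x))
    have hcl : IsClosed (f ⁻¹' {f x}) := by
      have : f ⁻¹' {f x} = (⋃ s ∈ ({f x}ᶜ : Set (Set K)), f ⁻¹' {s})ᶜ := by
        ext z; simp only [Set.mem_preimage, Set.mem_singleton_iff, Set.mem_compl_iff, Set.mem_iUnion,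
          exists_prop, not_exists, not_and]
        exact ⟨fun h i hi h' => hi (h'.symm.trans h), fun h => by_contra fun hn => h _ hn rfl⟩
      rw [this]
      exact (isOpen_biUnion fun s _ => hfo s).isClosed_compl
    have hDU : Subtype.val '' (f ⁻¹' {f x}) ⊆ U i := by
      rintro _ ⟨z, hz, rfl⟩
      have hz' : f z = f x := hz
      have : i ∈ f z := by rw [hz']; exact ⟨hi, hxi⟩
      exact hVU i this.2
    obtain ⟨δ, hδ, h⟩ := (hcl.isCompact.image continuous_subtype_val).exists_thickening_subset_open
      (h𝒰.1 _ (hU i)) hDU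
    exact ⟨min δ (ε / 4), lt_min hδ (by positivity), min_le_right _ _, U i, hU i,
      (Metric.thickening_mono (min_le_left _ _) _).trans h⟩
  choose r hr hrε W hW hrW using h3
  refine ⟨Set.range fun s : Set.range f => Metric.thickening (r s) (Subtype.val '' (f ⁻¹' {s.1})),
    ⟨?_, ?_⟩, ?_⟩
  · intro x
    refine ⟨Metric.ball x (ε / 4), Metric.ball_mem_nhds _ (by positivity), ?_⟩
    rintro _ ⟨⟨s, rfl⟩, a, ha, hax⟩ _ ⟨⟨s', rfl⟩, b, hb, hbx⟩
    obtain ⟨_, ⟨y, hy, rfl⟩, hay⟩ := Metric.mem_thickening_iff.1 ha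
    obtain ⟨_, ⟨z, hz, rfl⟩, hbz⟩ := Metric.mem_thickening_iff.1 hb
    have hy' : f y = s := hy
    have hz' : f z = s' := hz
    have hss : s = s' := by
      apply Subtype.ext
      rw [← hy', ← hz']
      apply hf
      rw [Subtype.dist_eq]
      have e1 := dist_triangle4 (y : X) a b z
      have e2 := dist_triangle_right a b x
      rw [Metric.mem_ball] at hax hbx
      rw [dist_comm a] at hay
      linarith [hrε s, hrε s']
    rw [hss]
  · rintro _ ⟨s, rfl⟩
    exact ⟨Metric.isOpen_thickening, W s, hW s, hrW s⟩
  · intro x hx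
    exact ⟨_, ⟨⟨f ⟨x, hx⟩, ⟨x, hx⟩, rfl⟩, rfl⟩,
      Metric.self_subset_thickening (hr _) _ ⟨⟨x, hx⟩, rfl, rfl⟩⟩

/-- If `X` is a metric space and `Y` is a subset of a σ-compact
zero-dimensional subset `C` of `X`, then TWO has a winning strategy in `G^ω_d(𝒪,𝒪_Y)`. -/
theorem statement10 {X : Type*} [MetricSpace X] (Y C : Set X) (hYC : Y ⊆ C)
    (hσcompact : ∃ K : ℕ → Set X, (∀ n, IsCompact (K n)) ∧ C = ⋃ n, K n)
    (hzd : ZeroDimensional ↥C) :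
    TwoWinsGomega X Y := by
  classical
  obtain ⟨K, hK, rfl⟩ := hσcompact
  have h := fun n 𝒰 (h𝒰 : IsOpenCover 𝒰) =>
    compact_move (K n) (⋃ n, K n) (Set.subset_iUnion K n) (hK n) hzd 𝒰 h𝒰
  choose F hF hKF using h
  let G : ℕ → Set (Set X) → Set (Set X) := fun n 𝒰 => if h : IsOpenCover 𝒰 then F n 𝒰 h else ∅
  have hG : ∀ n 𝒰 (h : IsOpenCover 𝒰), G n 𝒰 = F n 𝒰 h := fun n 𝒰 h => dif_pos h
  refine ⟨fun l => G (l.length - 1) (l.getD (l.length - 1) ∅), fun U hU => ?_⟩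
  have key2 : ∀ n, G ((List.ofFn fun i : Fin (n+1) => U i).length - 1)
      ((List.ofFn fun i : Fin (n+1) => U i).getD
        ((List.ofFn fun i : Fin (n+1) => U i).length - 1) ∅) = F n (U n) (hU n) := by
    intro n
    rw [← hG, List.length_ofFn, Nat.add_sub_cancel,
      List.getD_eq_getElem _ _ (by rw [List.length_ofFn]; omega), List.getElem_ofFn]
  simp only [key2]
  refine ⟨fun n => hF _ _ _, fun y hy => ?_⟩
  obtain ⟨n, hn⟩ := Set.mem_iUnion.1 (hYC hy)
  exact Set.mem_iUnion.2 ⟨n, hKF n _ (hU n) hn⟩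

end SSG
end

section
/- Let X be a metrizable space and let Y be a subspace of X. If player TWO has a winning strategy in the game G^ω_d(𝒪,𝒪_Y) on X, then Y is contained in a union of countably many closed, strongly zero-dimensional subsets of X. -/
namespace SSG

theorem szd_of_equiv {C : Type*} [TopologicalSpace C] (E : ℕ → C → C → Prop)
    (hE : ∀ n, Equivalence (E n)) (ho : ∀ n x, IsOpen {y | E n x y})
    (hs : ∀ x (U : Set C), IsOpen U → x ∈ U → ∃ n, {y | E n x y} ⊆ U) :
    StronglyZeroDim C := by
  classical
  intro 𝒰 _ hU
  let F : ℕ → C → Set C := fun n x => {y | ∀ k ≤ n, E k x y}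
  have hFo : ∀ n x, IsOpen (F n x) := by
    intro n x
    have : F n x = ⋂ k ∈ Set.Iic n, {y | E k x y} := by
      ext y; simp [F]
    rw [this]
    exact (Set.finite_Iic n).isOpen_biInter fun k _ => ho k x
  have hFr : ∀ n x, x ∈ F n x := fun n x k _ => (hE k).refl x
  have hFeq : ∀ n x y z, z ∈ F n x → z ∈ F n y → F n x = F n y := by
    intro n x y z hx hy
    ext w
    constructor
    · intro hw k hk
      exact (hE k).trans (hy k hk) ((hE k).trans ((hE k).symm (hx k hk)) (hw k hk))
    · intro hw k hk
      exact (hE k).trans (hx k hk) ((hE k).trans ((hE k).symm (hy k hk)) (hw k hk))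
  have hex : ∀ x, ∃ n, ∃ U ∈ 𝒰, F n x ⊆ U := by
    intro x
    have : x ∈ ⋃₀ 𝒰 := by rw [hU.2]; trivial
    obtain ⟨U, hUm, hxU⟩ := this
    obtain ⟨n, hn⟩ := hs x U (hU.1 U hUm) hxU
    exact ⟨n, U, hUm, fun y hy => hn (hy n le_rfl)⟩
  let N : C → ℕ := fun x => Nat.find (hex x)
  have key : ∀ x y z, N x ≤ N y → z ∈ F (N x) x → z ∈ F (N y) y →
      F (N x) x = F (N y) y := by
    intro x y z hle hx hy
    have hy' : z ∈ F (N x) y := fun k hk => hy k (hk.trans hle)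
    have e := hFeq _ _ _ _ hx hy'
    have h1 : N y ≤ N x := by
      apply Nat.find_min'
      rw [← e]
      exact Nat.find_spec (hex x)
    rw [← le_antisymm hle h1]
    exact e
  refine ⟨Set.range fun x => F (N x) x, ?_, ?_, ?_⟩
  · rintro _ ⟨x, rfl⟩
    exact ⟨hFo _ _, Nat.find_spec (hex x)⟩
  · rintro _ ⟨x, rfl⟩ _ ⟨y, rfl⟩ hne
    rw [Set.disjoint_left]
    intro z hx hy
    apply hne
    rcases le_total (N x) (N y) with hl | hl
    · exact key x y z hl hx hy
    · exact (key y x z hl hy hx).symm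
  · rw [Set.eq_univ_iff_forall]
    exact fun x => ⟨_, ⟨x, rfl⟩, hFr _ _⟩

theorem mem_closure_unique {X : Type*} [TopologicalSpace X] {𝒱 : Set (Set X)}
    (hd : IsDiscreteFam 𝒱) (x : X) :
    ∃ U, IsOpen U ∧ x ∈ U ∧ ∀ V ∈ 𝒱, ∀ W ∈ 𝒱, ∀ y ∈ U, ∀ z ∈ U, y ∈ closure V →
      z ∈ closure W → V = W := by
  obtain ⟨U, hU, hs⟩ := hd x
  obtain ⟨O, hOU, hO, hx⟩ := mem_nhds_iff.1 hU
  refine ⟨O, hO, hx, fun V hV W hW y hy z hz hyV hzW => hs ⟨hV, ?_⟩ ⟨hW, ?_⟩⟩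
  · obtain ⟨w, h1, h2⟩ := mem_closure_iff.1 hyV O hO hy
    exact ⟨w, h2, hOU h1⟩
  · obtain ⟨w, h1, h2⟩ := mem_closure_iff.1 hzW O hO hz
    exact ⟨w, h2, hOU h1⟩

theorem mem_closure_sUnion {X : Type*} [TopologicalSpace X] {𝒱 : Set (Set X)}
    (hd : IsDiscreteFam 𝒱) {x : X} (hx : x ∈ closure (⋃₀ 𝒱)) : ∃ V ∈ 𝒱, x ∈ closure V := by
  obtain ⟨U, hU, hs⟩ := hd x
  obtain ⟨w, hwU, V, hV, hwV⟩ := mem_closure_iff_nhds.1 hx U hU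
  refine ⟨V, hV, mem_closure_iff_nhds.2 fun T hT => ?_⟩
  obtain ⟨v, ⟨hvT, hvU⟩, W, hW, hvW⟩ := mem_closure_iff_nhds.1 hx _ (Filter.inter_mem hT hU)
  have : V = W := hs ⟨hV, w, hwV, hwU⟩ ⟨hW, v, hvW, hvU⟩
  exact ⟨v, hvT, this ▸ hvW⟩

/-- If `X` is metrizable and TWO has a winning strategy in
`G^ω_d(𝒪,𝒪_Y)`, then `Y` is contained in a union of countably many closed, strongly
zero-dimensional subsets of `X`. -/
theorem statement11 {X : Type*} [TopologicalSpace X] [TopologicalSpace.MetrizableSpace X]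
    (Y : Set X) (h : TwoWinsGomega X Y) :
    ∃ C : ℕ → Set X, (∀ n, IsClosed (C n) ∧ StronglyZeroDim ↥(C n)) ∧ Y ⊆ ⋃ n, C n := by
  classical
  letI := TopologicalSpace.metrizableSpaceMetric X
  obtain ⟨τ, hτ⟩ := h
  let B : ℕ → Set (Set X) := fun n => Set.range fun x : X => Metric.ball x (1 / ((n : ℝ) + 1))
  have hB : ∀ n, IsOpenCover (B n) := by
    intro n
    refine ⟨?_, ?_⟩
    · rintro _ ⟨x, rfl⟩
      exact Metric.isOpen_ball
    · rw [Set.eq_univ_iff_forall]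
      exact fun x => ⟨_, ⟨x, rfl⟩, Metric.mem_ball_self (by positivity)⟩
  have legal : ∀ (s : List ℕ) (n : ℕ), LegalTwoMove (B n) (τ ((s ++ [n]).map B)) := by
    intro s n
    have h1 := (hτ (fun i => B ((s ++ [n]).getD i 0)) (fun _ => hB _)).1 s.length
    have e : (List.ofFn fun i : Fin (s.length + 1) => B ((s ++ [n]).getD i 0))
        = (s ++ [n]).map B := by
      apply List.ext_getElem
      · simp
      · intro i h1 h2
        have h3 : i < (s ++ [n]).length := by simpa only [List.length_map] using h2
        rw [List.getElem_ofFn, List.getElem_map, List.getD_eq_getElem _ _ h3]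
    rw [e] at h1
    simpa using h1
  let D : List ℕ → Set X := fun s => ⋂ n, closure (⋃₀ τ ((s ++ [n]).map B))
  have hD : ∀ s, StronglyZeroDim ↥(D s) := by
    intro s
    have hx : ∀ (x : D s) n, ∃ V ∈ τ ((s ++ [n]).map B), (x : X) ∈ closure V := fun x n =>
      mem_closure_sUnion (legal s n).1 (Set.mem_iInter.1 x.2 n)
    have huniq : ∀ n (x : X), ∀ V ∈ τ ((s ++ [n]).map B), ∀ W ∈ τ ((s ++ [n]).map B),
        x ∈ closure V → x ∈ closure W → V = W := by
      intro n x V hV W hW h1 h2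
      obtain ⟨U, _, hxU, hu⟩ := mem_closure_unique (legal s n).1 x
      exact hu V hV W hW x hxU x hxU h1 h2
    refine szd_of_equiv (fun n x y => ∃ V ∈ τ ((s ++ [n]).map B),
      (x : X) ∈ closure V ∧ (y : X) ∈ closure V) ?_ ?_ ?_
    · intro n
      refine ⟨fun x => ?_, ?_, ?_⟩
      · obtain ⟨V, hV, h1⟩ := hx x n
        exact ⟨V, hV, h1, h1⟩
      · rintro x y ⟨V, hV, h1, h2⟩
        exact ⟨V, hV, h2, h1⟩
      · rintro x y z ⟨V, hV, h1, h2⟩ ⟨W, hW, h3, h4⟩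
        obtain rfl := huniq n y V hV W hW h2 h3
        exact ⟨V, hV, h1, h4⟩
    · intro n x
      rw [isOpen_iff_mem_nhds]
      rintro y ⟨V, hV, h1, h2⟩
      obtain ⟨U, hUo, hyU, hu⟩ := mem_closure_unique (legal s n).1 (y : X)
      have : ((↑) : D s → X) ⁻¹' U ∈ nhds y :=
        (hUo.preimage continuous_subtype_val).mem_nhds hyU
      refine Filter.mem_of_superset this fun z hz => ?_
      obtain ⟨W, hW, h3⟩ := hx z n
      obtain rfl := hu V hV W hW y hyU z hz h2 h3
      exact ⟨V, hV, h1, h3⟩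
    · intro x U hU hxU
      obtain ⟨ε, hε, hb⟩ := Metric.isOpen_iff.1 hU x hxU
      obtain ⟨n, hn⟩ := exists_nat_one_div_lt (half_pos hε)
      refine ⟨n, ?_⟩
      rintro y ⟨V, hV, h1, h2⟩
      apply hb
      obtain ⟨_, _, ⟨c, rfl⟩, hVc⟩ := (legal s n).2 V hV
      have hcl : closure V ⊆ Metric.closedBall c (1 / ((n : ℝ) + 1)) :=
        closure_minimal (hVc.trans Metric.ball_subset_closedBall) Metric.isClosed_closedBall
      have d1 := Metric.mem_closedBall.1 (hcl h1)
      have d2 := Metric.mem_closedBall.1 (hcl h2)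
      have d3 := dist_triangle_right (y : X) (x : X) c
      rw [Metric.mem_ball, Subtype.dist_eq]
      linarith
  obtain ⟨g, hg⟩ := exists_surjective_nat (List ℕ)
  refine ⟨fun n => D (g n), fun n => ⟨isClosed_iInter fun _ => isClosed_closure, hD _⟩, ?_⟩
  intro y hy
  by_contra hcon
  have hno : ∀ s, ∃ n, y ∉ closure (⋃₀ τ ((s ++ [n]).map B)) := by
    intro s
    by_contra! hs
    obtain ⟨n, rfl⟩ := hg s
    exact hcon (Set.mem_iUnion.2 ⟨n, Set.mem_iInter.2 hs⟩)
  choose f hf using hno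
  let t : ℕ → List ℕ := fun n => Nat.rec [] (fun _ s => s ++ [f s]) n
  have ht : ∀ n, (List.ofFn fun i : Fin n => B (f (t i))) = (t n).map B := by
    intro n
    induction n with
    | zero => simp [t]
    | succ n ih =>
      rw [List.ofFn_succ', List.concat_eq_append]
      have : t (n + 1) = t n ++ [f (t n)] := rfl
      rw [this, List.map_append, ← ih]
      simp
  have hw := (hτ (fun i => B (f (t i))) fun _ => hB _).2 hy
  obtain ⟨n, hn⟩ := Set.mem_iUnion.1 hw
  rw [ht (n + 1)] at hn
  exact hf (t n) (subset_closure hn)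

end SSG
end

section
/- For a metrizable space X the following are equivalent: (1) player TWO has a winning strategy in the game G^ω_d(𝒪,𝒪) on X; (2) X is ultraparacompact; (3) player TWO has a winning strategy in the game G^1_d(𝒪,𝒪) on X. -/
namespace SSG

theorem IsDiscreteFam.closure_eq {X : Type*} [TopologicalSpace X] {F K : Set (Set X)}
    (hF : IsDiscreteFam F) (hK : K ⊆ F) {x : X} :
    x ∈ closure (⋃₀ K) ↔ ∃ V ∈ K, x ∈ closure V := by
  have hlf : LocallyFinite (fun V : K => (V : Set X)) := by
    intro x
    obtain ⟨U, hU, hs⟩ := hF x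
    refine ⟨U, hU, Set.Subsingleton.finite ?_⟩
    intro a ha b hb
    exact Subtype.ext (hs ⟨hK a.2, ha⟩ ⟨hK b.2, hb⟩)
  rw [Set.sUnion_eq_iUnion, hlf.closure_iUnion]
  simp

theorem IsDiscreteFam.eq_of_mem {X : Type*} [TopologicalSpace X] {F : Set (Set X)}
    (hF : IsDiscreteFam F) {V W : Set X} (hV : V ∈ F) (hW : W ∈ F) {x : X}
    (hx : x ∈ closure V) (hy : x ∈ closure W) : V = W := by
  obtain ⟨U, hU, hs⟩ := hF x
  refine hs ⟨hV, ?_⟩ ⟨hW, ?_⟩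
  · rw [Set.inter_comm]; exact mem_closure_iff_nhds.1 hx U hU
  · rw [Set.inter_comm]; exact mem_closure_iff_nhds.1 hy U hU

/-- Relative separation property of a set `D`. -/
def Sep {X : Type*} [TopologicalSpace X] (D : Set X) : Prop :=
  ∀ A B : Set X, IsClosed A → IsClosed B → Disjoint A B →
    ∃ A' B' : Set X, IsClosed A' ∧ IsClosed B' ∧ Disjoint A' B' ∧ A ⊆ A' ∧ B ⊆ B' ∧ D ⊆ A' ∪ B'

/-- The cover by balls of radius `1/(n+1)`. -/
def ballCover (X : Type*) [MetricSpace X] (n : ℕ) : Set (Set X) :=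
  Set.range fun x : X => Metric.ball x (1 / ((n : ℝ) + 1))

theorem ballCover_cover (X : Type*) [MetricSpace X] (n : ℕ) : IsOpenCover (ballCover X n) := by
  constructor
  · rintro _ ⟨x, rfl⟩
    exact Metric.isOpen_ball
  · refine Set.eq_univ_of_forall fun x => ⟨_, ⟨x, rfl⟩, ?_⟩
    exact Metric.mem_ball_self (by positivity)

theorem small_aux {X : Type*} [MetricSpace X] {A : Set X} (hA : IsClosed A) {x : X} (hx : x ∉ A) :
    ∃ n : ℕ, ∀ V : Set X, (∃ U ∈ ballCover X n, V ⊆ U) → x ∈ closure V → Disjoint (closure V) A := by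
  obtain ⟨ε, hε, hb⟩ := Metric.isOpen_iff.1 hA.isOpen_compl x hx
  obtain ⟨n, hn⟩ := exists_nat_one_div_lt (half_pos hε)
  refine ⟨n, ?_⟩
  rintro V ⟨_, ⟨y, rfl⟩, hV⟩ hxV
  rw [Set.disjoint_left]
  intro z hz
  have hc : closure V ⊆ Metric.closedBall y (1 / ((n : ℝ) + 1)) :=
    (closure_mono hV).trans Metric.closure_ball_subset_closedBall
  have h1 := Metric.mem_closedBall.1 (hc hz)
  have h2 := Metric.mem_closedBall'.1 (hc hxV)
  apply hb
  rw [Metric.mem_ball]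
  have := dist_triangle z y x
  linarith

theorem sep_of_small {X : Type*} [MetricSpace X] (F : ℕ → Set (Set X))
    (hF : ∀ n, LegalTwoMove (ballCover X n) (F n)) :
    Sep (⋂ n, closure (⋃₀ F n)) := by
  intro A B hA hB hAB
  set D := ⋂ n, closure (⋃₀ F n) with hD
  have hDc : IsClosed D := isClosed_iInter fun n => isClosed_closure
  let LF : ℕ → Set (Set X) := fun n => {V | V ∈ F n ∧ Disjoint (closure V) B}
  let MF : ℕ → Set (Set X) := fun n => {V | V ∈ F n ∧ ¬ Disjoint (closure V) B ∧ Disjoint (closure V) A}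
  let NF : ℕ → Set (Set X) :=
    fun n => {V | V ∈ F n ∧ ¬ Disjoint (closure V) B ∧ ¬ Disjoint (closure V) A}
  have hL : ∀ n x, x ∈ closure (⋃₀ LF n) ↔ ∃ V ∈ LF n, x ∈ closure V :=
    fun n x => (hF n).1.closure_eq (fun V hV => hV.1)
  have hM : ∀ n x, x ∈ closure (⋃₀ MF n) ↔ ∃ V ∈ MF n, x ∈ closure V :=
    fun n x => (hF n).1.closure_eq (fun V hV => hV.1)
  have hN : ∀ n x, x ∈ closure (⋃₀ NF n) ↔ ∃ V ∈ NF n, x ∈ closure V :=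
    fun n x => (hF n).1.closure_eq (fun V hV => hV.1)
  have hFx : ∀ n (x : D), ∃ V ∈ F n, (x : X) ∈ closure V := fun n x =>
    ((hF n).1.closure_eq (le_refl (F n))).1 (Set.mem_iInter.1 x.2 n)
  -- characterisation through any member containing the point
  have key : ∀ n (x : X) (V : Set X), V ∈ F n → x ∈ closure V →
      ((x ∈ closure (⋃₀ LF n) ↔ V ∈ LF n) ∧ (x ∈ closure (⋃₀ MF n) ↔ V ∈ MF n) ∧
        (x ∈ closure (⋃₀ NF n) ↔ V ∈ NF n)) := by
    intro n x V hV hx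
    rw [hL, hM, hN]
    refine ⟨⟨?_, fun h => ⟨V, h, hx⟩⟩, ⟨?_, fun h => ⟨V, h, hx⟩⟩, ⟨?_, fun h => ⟨V, h, hx⟩⟩⟩ <;>
    · rintro ⟨W, hW, hxW⟩
      rwa [(hF n).1.eq_of_mem hV hW.1 hx hxW]
  let L : ℕ → Set D := fun n => {x | (x : X) ∈ closure (⋃₀ LF n)}
  let M : ℕ → Set D := fun n => {x | (x : X) ∈ closure (⋃₀ MF n)}
  let N : ℕ → Set D := fun n => {x | (x : X) ∈ closure (⋃₀ NF n)}
  have cL : ∀ n, IsClosed (L n) := fun n => isClosed_closure.preimage continuous_subtype_val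
  have cM : ∀ n, IsClosed (M n) := fun n => isClosed_closure.preimage continuous_subtype_val
  have cN : ∀ n, IsClosed (N n) := fun n => isClosed_closure.preimage continuous_subtype_val
  have tri : ∀ n (x : D), (x ∈ L n ∧ x ∉ M n ∧ x ∉ N n) ∨ (x ∉ L n ∧ x ∈ M n ∧ x ∉ N n) ∨
      (x ∉ L n ∧ x ∉ M n ∧ x ∈ N n) := by
    intro n x
    obtain ⟨V, hV, hx⟩ := hFx n x
    obtain ⟨h1, h2, h3⟩ := key n x V hV hx
    simp only [L, M, N, Set.mem_ofPred_eq, h1, h2, h3]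
    simp only [LF, MF, NF, Set.mem_ofPred_eq]
    tauto
  have oL : ∀ n, IsOpen (L n) := by
    intro n
    have : L n = (M n ∪ N n)ᶜ := by
      ext x; simp only [Set.mem_compl_iff, Set.mem_union]; have := tri n x; tauto
    rw [this]; exact ((cM n).union (cN n)).isOpen_compl
  have oM : ∀ n, IsOpen (M n) := by
    intro n
    have : M n = (L n ∪ N n)ᶜ := by
      ext x; simp only [Set.mem_compl_iff, Set.mem_union]; have := tri n x; tauto
    rw [this]; exact ((cL n).union (cN n)).isOpen_compl
  have oN : ∀ n, IsOpen (N n) := by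
    intro n
    have : N n = (L n ∪ M n)ᶜ := by
      ext x; simp only [Set.mem_compl_iff, Set.mem_union]; have := tri n x; tauto
    rw [this]; exact ((cL n).union (cM n)).isOpen_compl
  have exN : ∀ x : D, ∃ n, x ∉ N n := by
    intro x
    by_cases hxA : (x : X) ∈ A
    · have hxB : (x : X) ∉ B := Set.disjoint_left.1 hAB hxA
      obtain ⟨n, hn⟩ := small_aux hB hxB
      refine ⟨n, fun hx => ?_⟩
      obtain ⟨V, hV, hxV⟩ := (hN n x).1 hx
      exact hV.2.1 (hn V ((hF n).2 V hV.1).2 hxV)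
    · obtain ⟨n, hn⟩ := small_aux hA hxA
      refine ⟨n, fun hx => ?_⟩
      obtain ⟨V, hV, hxV⟩ := (hN n x).1 hx
      exact hV.2.2 (hn V ((hF n).2 V hV.1).2 hxV)
  let P : Set D := ⋃ n, (L n ∩ ⋂ m ∈ Finset.range n, N m)
  let Q : Set D := ⋃ n, (M n ∩ ⋂ m ∈ Finset.range n, N m)
  have oP : IsOpen P := isOpen_iUnion fun n => (oL n).inter
    (isOpen_biInter_finset fun m _ => oN m)
  have oQ : IsOpen Q := isOpen_iUnion fun n => (oM n).inter
    (isOpen_biInter_finset fun m _ => oN m)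
  have hPQ : Disjoint P Q := by
    rw [Set.disjoint_left]
    intro x hP hQ
    simp only [P, Q, Set.mem_iUnion, Set.mem_inter_iff, Set.mem_iInter, Finset.mem_range] at hP hQ
    obtain ⟨n, h1, h2⟩ := hP
    obtain ⟨m, h3, h4⟩ := hQ
    have tn := tri n x
    have tm := tri m x
    rcases lt_trichotomy n m with h | h | h
    · have := h4 n h; tauto
    · subst h; tauto
    · have := h2 m h; tauto
  have hcov : ∀ x, x ∈ P ∨ x ∈ Q := by
    intro x
    classical
    have h1 := Nat.find_spec (exN x)
    have h2 : ∀ m < Nat.find (exN x), x ∈ N m := fun m hm => not_not.1 (Nat.find_min (exN x) hm)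
    simp only [P, Q, Set.mem_iUnion, Set.mem_inter_iff, Set.mem_iInter, Finset.mem_range]
    rcases tri _ x with h | h | h
    · exact Or.inl ⟨_, h.1, h2⟩
    · exact Or.inr ⟨_, h.2.1, h2⟩
    · exact absurd h.2.2 h1
  have cP : IsClosed P := by
    have : P = Qᶜ := by
      ext x
      exact ⟨fun h => Set.disjoint_left.1 hPQ h, fun h => (hcov x).resolve_right h⟩
    rw [this]; exact oQ.isClosed_compl
  have cQ : IsClosed Q := by
    have : Q = Pᶜ := by
      ext x
      exact ⟨fun h => Set.disjoint_right.1 hPQ h, fun h => (hcov x).resolve_left h⟩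
    rw [this]; exact oP.isClosed_compl
  have hPB : ∀ x ∈ P, (x : X) ∉ B := by
    intro x hx
    obtain ⟨n, h1, -⟩ := Set.mem_iUnion.1 hx
    obtain ⟨V, hV, hxV⟩ := (hL n x).1 h1
    exact Set.disjoint_left.1 hV.2 hxV
  have hQA : ∀ x ∈ Q, (x : X) ∉ A := by
    intro x hx
    obtain ⟨n, h1, -⟩ := Set.mem_iUnion.1 hx
    obtain ⟨V, hV, hxV⟩ := (hM n x).1 h1
    exact Set.disjoint_left.1 hV.2.2 hxV
  refine ⟨A ∪ Set.image Subtype.val P, B ∪ Set.image Subtype.val Q,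
    hA.union (hDc.isClosedEmbedding_subtypeVal.isClosedMap _ cP),
    hB.union (hDc.isClosedEmbedding_subtypeVal.isClosedMap _ cQ), ?_,
    Set.subset_union_left, Set.subset_union_left, ?_⟩
  · rw [Set.disjoint_left]
    rintro x (hx | ⟨y, hy, rfl⟩) (hx' | ⟨z, hz, h⟩)
    · exact Set.disjoint_left.1 hAB hx hx'
    · subst h; exact hQA z hz hx
    · exact hPB y hy hx'
    · have : z = y := Subtype.ext h
      subst this
      exact Set.disjoint_left.1 hPQ hy hz
  · intro x hx
    rcases hcov ⟨x, hx⟩ with h | h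
    · exact Or.inl (Or.inr ⟨_, h, rfl⟩)
    · exact Or.inr (Or.inr ⟨_, h, rfl⟩)

theorem exists_open_sep {X : Type*} [TopologicalSpace X] [NormalSpace X] {A B : Set X}
    (hA : IsClosed A) (hB : IsClosed B) (hAB : Disjoint A B) :
    ∃ P Q : Set X, IsOpen P ∧ IsOpen Q ∧ A ⊆ P ∧ B ⊆ Q ∧ Disjoint (closure P) (closure Q) := by
  obtain ⟨P, oP, hP, hP'⟩ := normal_exists_closure_subset hA hB.isOpen_compl
    (Set.disjoint_left.1 hAB)
  obtain ⟨Q, oQ, hQ, hQ'⟩ := normal_exists_closure_subset hB (isClosed_closure (s := P)).isOpen_compl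
    (fun x hx hx' => hP' hx' hx)
  exact ⟨P, Q, oP, oQ, hP, hQ, Set.disjoint_right.2 hQ'⟩

theorem clopen_sep {X : Type*} [TopologicalSpace X] [NormalSpace X] (D : ℕ → Set X)
    (hD : ∀ n, Sep (D n)) (hcov : ∀ x, ∃ n, x ∈ D n) {A B : Set X}
    (hA : IsClosed A) (hB : IsClosed B) (hAB : Disjoint A B) :
    ∃ C : Set X, IsClopen C ∧ A ⊆ C ∧ Disjoint C B := by
  let S := {p : Set X × Set X // IsOpen p.1 ∧ IsOpen p.2 ∧ Disjoint (closure p.1) (closure p.2)}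
  have step : ∀ (n : ℕ) (s : S), ∃ t : S, s.1.1 ⊆ t.1.1 ∧ s.1.2 ⊆ t.1.2 ∧
      D n ⊆ t.1.1 ∪ t.1.2 := by
    rintro n ⟨⟨P, Q⟩, oP, oQ, hPQ⟩
    obtain ⟨A', B', cA, cB, hd, h1, h2, h3⟩ := hD n _ _ isClosed_closure isClosed_closure hPQ
    obtain ⟨P', Q', oP', oQ', h4, h5, h6⟩ := exists_open_sep cA cB hd
    exact ⟨⟨⟨P', Q'⟩, oP', oQ', h6⟩, subset_closure.trans (h1.trans h4),
      subset_closure.trans (h2.trans h5), h3.trans (Set.union_subset_union h4 h5)⟩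
  choose g hg1 hg2 hg3 using step
  obtain ⟨P, Q, oP, oQ, hP, hQ, hPQ⟩ := exists_open_sep hA hB hAB
  let s : ℕ → S := fun n => Nat.rec ⟨⟨P, Q⟩, oP, oQ, hPQ⟩ (fun n t => g n t) n
  have hs : ∀ n, s (n + 1) = g n (s n) := fun n => rfl
  have m1 : Monotone fun n => (s n).1.1 := monotone_nat_of_le_succ fun n => hg1 n (s n)
  have m2 : Monotone fun n => (s n).1.2 := monotone_nat_of_le_succ fun n => hg2 n (s n)
  have hdis : Disjoint (⋃ n, (s n).1.1) (⋃ n, (s n).1.2) := by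
    rw [Set.disjoint_left]
    intro x h1 h2
    obtain ⟨n, h1⟩ := Set.mem_iUnion.1 h1
    obtain ⟨m, h2⟩ := Set.mem_iUnion.1 h2
    exact Set.disjoint_left.1 (s (max n m)).2.2.2 (subset_closure (m1 (le_max_left n m) h1))
      (subset_closure (m2 (le_max_right n m) h2))
  refine ⟨⋃ n, (s n).1.1, ⟨?_, isOpen_iUnion fun n => (s n).2.1⟩, ?_, ?_⟩
  · have : (⋃ n, (s n).1.1) = (⋃ n, (s n).1.2)ᶜ := by
      ext x
      refine ⟨fun h => Set.disjoint_left.1 hdis h, fun h => ?_⟩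
      obtain ⟨n, hn⟩ := hcov x
      rcases hg3 n (s n) hn with h' | h'
      · exact Set.mem_iUnion.2 ⟨n + 1, h'⟩
      · exact absurd (Set.mem_iUnion.2 ⟨n + 1, h'⟩) h
    rw [this]
    exact (isOpen_iUnion fun n => (s n).2.2.1).isClosed_compl
  · exact hP.trans (Set.subset_iUnion (fun n => (s n).1.1) 0)
  · exact hdis.mono_right (hQ.trans (Set.subset_iUnion (fun n => (s n).1.2) 0))

theorem ultra_of_sep {X : Type*} [TopologicalSpace X] [NormalSpace X] [ParacompactSpace X]
    (h : ∀ A B : Set X, IsClosed A → IsClosed B → Disjoint A B →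
      ∃ C : Set X, IsClopen C ∧ A ⊆ C ∧ Disjoint C B) : Ultraparacompact X := by
  rintro U ⟨hU, hcov⟩
  obtain ⟨v, ov, cv, lv, hv⟩ := precise_refinement (fun i : U => (i : Set X)) (fun i => hU i i.2)
    (by rw [← Set.sUnion_eq_iUnion, hcov])
  obtain ⟨w, cw, ow, hw⟩ := exists_iUnion_eq_closed_subset ov (fun x => lv.point_finite x) cv
  choose C hC1 hC2 hC3 using fun i => h (w i) (v i)ᶜ (ow i) (ov i).isClosed_compl
    (Set.disjoint_left.2 fun x hx hx' => hx' (hw i hx))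
  have hCv : ∀ i, C i ⊆ v i := fun i x hx => not_not.1 (Set.disjoint_left.1 (hC3 i) hx)
  have lC : LocallyFinite C := lv.subset hCv
  let r : U → U → Prop := WellOrderingRel
  let E : U → Set X := fun i => C i \ ⋃ j : {j // r j i}, C j
  have hdisj : ∀ i j x, r i j → x ∈ E i → x ∉ E j := fun i j x hij hi hj =>
    hj.2 (Set.mem_iUnion.2 ⟨⟨i, hij⟩, hi.1⟩)
  refine ⟨Set.range E, ?_, ?_, ?_⟩
  · rintro _ ⟨i, rfl⟩
    refine ⟨(hC1 i).isOpen.sdiff ?_, i, i.2, fun x hx => hv i (hCv i hx.1)⟩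
    exact (lC.comp_injective Subtype.val_injective).isClosed_iUnion fun j => (hC1 j.1).isClosed
  · rintro _ ⟨i, rfl⟩ _ ⟨j, rfl⟩ hne
    rw [Set.disjoint_left]
    intro x hi hj
    rcases trichotomous_of r i j with h | h | h
    · exact hdisj i j x h hi hj
    · exact hne (by rw [h])
    · exact hdisj j i x h hj hi
  · refine Set.eq_univ_of_forall fun x => ?_
    have hx : {i | x ∈ C i}.Nonempty := by
      have : x ∈ ⋃ i, w i := by rw [cw]; trivial
      obtain ⟨i, hi⟩ := Set.mem_iUnion.1 this
      exact ⟨i, hC2 i hi⟩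
    have wf : WellFounded r := WellOrderingRel.isWellOrder.wf
    refine ⟨_, ⟨wf.min _ hx, rfl⟩, wf.min_mem _ hx, ?_⟩
    intro hx'
    obtain ⟨⟨j, hj⟩, hxj⟩ := Set.mem_iUnion.1 hx'
    exact wf.not_lt_min _ hxj hj

theorem ultra_of_gomega {X : Type*} [TopologicalSpace X] [TopologicalSpace.MetrizableSpace X]
    (h : TwoWinsGomega X Set.univ) : Ultraparacompact X := by
  let _ : MetricSpace X := TopologicalSpace.metrizableSpaceMetric X
  obtain ⟨τ, hτ⟩ := h
  let F : List ℕ → ℕ → Set (Set X) := fun l n => τ ((l ++ [n]).map (ballCover X))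
  have hF : ∀ l n, LegalTwoMove (ballCover X n) (F l n) := by
    intro l n
    have := (hτ (fun i => ballCover X ((l ++ [n]).getD i 0)) (fun i => ballCover_cover X _)).1 l.length
    have e : (List.ofFn fun i : Fin (l.length + 1) => ballCover X ((l ++ [n]).getD i 0))
        = (l ++ [n]).map (ballCover X) := by
      apply List.ext_getElem
      · simp
      · intro i h1 h2
        simp at h1 h2 ⊢
        grind
    rw [e] at this
    simpa [F] using this
  let D : List ℕ → Set X := fun l => ⋂ n, closure (⋃₀ F l n)
  have hD : ∀ l, Sep (D l) := fun l => sep_of_small (F l) (hF l)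
  have hcov : ∀ x, ∃ l, x ∈ D l := by
    intro x
    by_contra! hx
    have : ∀ l, ∃ n, x ∉ closure (⋃₀ F l n) := by
      intro l
      have := hx l
      simpa only [D, Set.mem_iInter, not_forall] using this
    choose f hf using this
    let H : ℕ → List ℕ := fun n => Nat.rec [] (fun _ l => l ++ [f l]) n
    have hH : ∀ n, H (n + 1) = H n ++ [f (H n)] := fun n => rfl
    have e : ∀ n, (List.ofFn fun i : Fin n => ballCover X (f (H i))) = (H n).map (ballCover X) := by
      intro n
      induction n with
      | zero => simp [H]
      | succ n ih => rw [List.ofFn_succ', hH]; simp [ih]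
    have h2 := (hτ (fun i => ballCover X (f (H i))) (fun i => ballCover_cover X _)).2 (Set.mem_univ x)
    obtain ⟨n, hn⟩ := Set.mem_iUnion.1 h2
    rw [e (n + 1), hH] at hn
    exact hf (H n) (subset_closure hn)
  refine ultra_of_sep fun A B hA hB hAB => ?_
  obtain ⟨g, hg⟩ := exists_surjective_nat (List ℕ)
  refine clopen_sep (fun n => D (g n)) (fun n => hD _) (fun x => ?_) hA hB hAB
  obtain ⟨l, hl⟩ := hcov x
  obtain ⟨n, rfl⟩ := hg l
  exact ⟨n, hl⟩

theorem gone_of_ultra {X : Type*} [TopologicalSpace X] (h : Ultraparacompact X) :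
    TwoWinsGone X Set.univ := by
  intro U hU
  obtain ⟨V, h1, h2, h3⟩ := h U hU
  refine ⟨V, ⟨?_, h1⟩, h3.ge⟩
  intro x
  obtain ⟨W, hW, hx⟩ := h3.ge (Set.mem_univ x)
  refine ⟨W, (h1 W hW).1.mem_nhds hx, ?_⟩
  have : ∀ A ∈ {A | A ∈ V ∧ (A ∩ W).Nonempty}, A = W := by
    rintro A ⟨hA, hne⟩
    by_contra hAW
    exact Set.not_disjoint_iff_nonempty_inter.2 hne (h2 hA hW hAW)
  intro A hA B hB
  rw [this A hA, this B hB]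

theorem ultra_of_gone {X : Type*} [TopologicalSpace X] (h : TwoWinsGone X Set.univ) :
    Ultraparacompact X := by
  intro U hU
  obtain ⟨V, ⟨h1, h2⟩, h3⟩ := h U hU
  refine ⟨V, h2, ?_, Set.univ_subset_iff.1 h3⟩
  intro A hA B hB hne
  rw [Set.disjoint_left]
  intro x hxA hxB
  exact hne (h1.eq_of_mem hA hB (subset_closure hxA) (subset_closure hxB))

theorem gomega_of_gone {X : Type*} [TopologicalSpace X] (h : TwoWinsGone X Set.univ) :
    TwoWinsGomega X Set.univ := by
  classical
  choose t ht1 ht2 using h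
  let T : Set (Set X) → Set (Set X) := fun U => if h : IsOpenCover U then t U h else ∅
  refine ⟨fun l => T (l.getLastD ∅), fun U hU => ?_⟩
  have e : ∀ n, (List.ofFn fun i : Fin (n + 1) => U i).getLastD ∅ = U n := by
    intro n
    rw [List.ofFn_succ']; simp
  have e2 : ∀ n, T (U n) = t (U n) (hU n) := fun n => dif_pos (hU n)
  simp only [e, e2]
  exact ⟨fun n => ht1 _ _, (ht2 _ (hU 0)).trans (Set.subset_iUnion (fun n => ⋃₀ t (U n) (hU n)) 0)⟩

/-- For metrizable `X`: TWO wins `G^ω_d(𝒪,𝒪)` iff `X` is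
ultraparacompact iff TWO wins `G^1_d(𝒪,𝒪)`. -/
theorem statement12 {X : Type*} [TopologicalSpace X] [TopologicalSpace.MetrizableSpace X] :
    (TwoWinsGomega X Set.univ ↔ Ultraparacompact X) ∧
    (Ultraparacompact X ↔ TwoWinsGone X Set.univ) := by
  exact ⟨⟨ultra_of_gomega, fun h => gomega_of_gone (gone_of_ultra h)⟩,
    ⟨gone_of_ultra, ultra_of_gone⟩⟩

end SSG
end

section
/- Let Y be a subspace of the real line ℝ. The following are equivalent: (1) player TWO has a winning strategy in the game G^ω_d(𝒪,𝒪_Y) on ℝ; (2) Y is a first category (meager) set of real numbers; (3) player TWO has a winning strategy in the Banach–Mazur game MB(Y,ℝ). -/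
namespace SSG

open Set TopologicalSpace in
theorem meagre_seq {Y : Set ℝ} (h : IsMeagre Y) :
    ∃ N : ℕ → Set ℝ, (∀ n, IsClosed (N n) ∧ interior (N n) = ∅) ∧ Y ⊆ ⋃ n, N n := by
  obtain ⟨S, hS, hc, hY⟩ := isMeagre_iff_countable_union_isNowhereDense.1 h
  obtain ⟨f, hf⟩ := (hc.insert ∅).exists_eq_range (Set.insert_nonempty _ _)
  refine ⟨fun n => closure (f n), fun n => ⟨isClosed_closure, ?_⟩, ?_⟩
  · have : f n ∈ insert ∅ S := hf ▸ Set.mem_range_self n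
    rcases this with h | h
    · simp [h]
    · exact hS _ h
  · intro y hy
    obtain ⟨s, hs, hys⟩ := hY hy
    have : s ∈ Set.range f := hf ▸ Set.mem_insert_of_mem _ hs
    obtain ⟨n, rfl⟩ := this
    exact Set.mem_iUnion.2 ⟨n, subset_closure hys⟩

open Set TopologicalSpace in
theorem meagre_to_MB {Y : Set ℝ} (h : IsMeagre Y) : TwoWinsMB ℝ Y := by
  obtain ⟨N, hN, hY⟩ := meagre_seq h
  have key : ∀ (O : ℕ → Set ℝ) (n : ℕ),
      (fun l : List (Set ℝ) => l.getLastD ∅ \ N (l.length - 1))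
        (List.ofFn fun i : Fin (n+1) => O i) = O n \ N n := by
    intro O n
    simp only [List.length_ofFn, Nat.add_sub_cancel]
    rw [List.ofFn_succ', List.concat_eq_append]
    simp
  refine ⟨fun l => l.getLastD ∅ \ N (l.length - 1), ?_, ?_⟩
  · intro O n hO
    rw [key]
    obtain ⟨h1, h2, -⟩ := hO n le_rfl
    refine ⟨h1.sdiff (hN n).1, ?_, Set.sdiff_subset⟩
    by_contra hne
    rw [Set.not_nonempty_iff_eq_empty, Set.sdiff_eq_empty] at hne
    have := interior_maximal hne h1
    rw [(hN n).2] at this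
    exact h2.ne_empty (Set.subset_empty_iff.1 this)
  · intro O hO
    rw [Set.eq_empty_iff_forall_notMem]
    rintro y ⟨hy, hyO⟩
    obtain ⟨n, hn⟩ := Set.mem_iUnion.1 (hY hy)
    have h1 := (hO (n+1)).2.2 n rfl (Set.mem_iInter.1 hyO (n+1))
    rw [key O n] at h1
    exact h1.2 hn

/-- TWO's position-set: everything at the start, otherwise TWO's answer. -/
def posSet (τ : List (Set ℝ) → Set ℝ) (p : List (Set ℝ)) : Set ℝ :=
  {x | p = [] ∨ x ∈ τ p}

/-- Legal positions with moves of ONE from the countable base. -/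
def LegPos (τ : List (Set ℝ) → Set ℝ) (p : List (Set ℝ)) : Prop :=
  ∀ k < p.length, p.getD k ∅ ∈ TopologicalSpace.countableBasis ℝ ∧
    p.getD k ∅ ⊆ posSet τ (p.take k)

theorem ofFn_getD (p : List (Set ℝ)) (k : ℕ) (hk : k ≤ p.length) :
    (List.ofFn fun i : Fin k => p.getD i ∅) = p.take k := by
  apply List.ext_getElem
  · simp [hk]
  · intro i h1 h2
    have : i < p.length := by simp at h1; omega
    simp [this]

open Set TopologicalSpace in
theorem MB_to_meagre {Y : Set ℝ} (h : TwoWinsMB ℝ Y) : IsMeagre Y := by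
  obtain ⟨τ, hleg, hwin⟩ := h
  have legal : ∀ p, LegPos τ p → p ≠ [] →
      IsOpen (τ p) ∧ (τ p).Nonempty ∧ τ p ⊆ p.getD (p.length - 1) ∅ := by
    intro p hp hne
    have hl : p.length ≠ 0 := by simpa using hne
    have := hleg (fun k => p.getD k ∅) (p.length - 1) ?_
    · rw [ofFn_getD p _ (by omega), List.take_of_length_le (by omega)] at this
      exact this
    · intro k hk
      obtain ⟨h1, h2⟩ := hp k (by omega)
      refine ⟨isOpen_of_mem_countableBasis h1, nonempty_of_mem_countableBasis h1, ?_⟩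
      rintro j rfl
      rw [ofFn_getD p _ (by omega)]
      intro x hx
      rcases h2 hx with h3 | h3
      · simp [hne] at h3
      · exact h3
  have ext : ∀ p A, LegPos τ p → A ∈ countableBasis ℝ → A ⊆ posSet τ p →
      LegPos τ (p ++ [A]) := by
    intro p A hp hA hAp k hk
    simp only [List.length_append, List.length_singleton] at hk
    rcases Nat.lt_or_ge k p.length with h | h
    · have := hp k h
      rw [List.getD_append _ _ _ _ h, List.take_append_of_le_length h.le]
      exact this
    · obtain rfl : k = p.length := by omega
      simpa using ⟨hA, hAp⟩
  have legalR : ∀ p, LegPos τ p → IsOpen (posSet τ p) := by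
    intro p hp
    by_cases hne : p = []
    · simp [posSet, hne]
    · simpa [posSet, hne] using (legal p hp hne).1
  let N : List (Set ℝ) → Set ℝ := fun p => {y | LegPos τ p ∧ y ∈ posSet τ p ∧
    ∀ A ∈ countableBasis ℝ, A ⊆ posSet τ p → y ∉ τ (p ++ [A])}
  have hN : ∀ p, IsNowhereDense (N p) := by
    intro p
    by_cases hp : LegPos τ p
    swap
    · have : N p = ∅ := by ext y; simp [N, hp]
      rw [this]; exact isNowhereDense_empty
    by_contra hd
    have hne : (interior (closure (N p))).Nonempty := Set.nonempty_iff_ne_empty.2 hd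
    obtain ⟨x, hx⟩ := hne
    obtain ⟨y, hy1, hy2⟩ := mem_closure_iff.1 (interior_subset hx) _ isOpen_interior hx
    obtain ⟨A, hA, hyA, hAs⟩ := (isBasis_countableBasis ℝ).exists_subset_of_mem_open
      (show y ∈ interior (closure (N p)) ∩ posSet τ p from ⟨hy1, hy2.2.1⟩)
      (isOpen_interior.inter (legalR p hp))
    have hAR := hAs.trans Set.inter_subset_right
    obtain ⟨ho, ⟨z, hz⟩, hs⟩ := legal _ (ext p A hp hA hAR) (by simp)
    have hzA : z ∈ A := by simpa using hs hz
    obtain ⟨w, hw1, hw2⟩ := mem_closure_iff.1 (interior_subset (hAs hzA).1) _ ho hz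
    exact hw2.2.2 A hA hAR hw1
  have hcov : Y ⊆ ⋃ p ∈ {l : List (Set ℝ) | ∀ x ∈ l, x ∈ countableBasis ℝ}, N p := by
    intro y hy
    by_contra hcon
    have step : ∀ p : {p // LegPos τ p ∧ y ∈ posSet τ p},
        ∃ A, A ∈ countableBasis ℝ ∧ A ⊆ posSet τ p.1 ∧ y ∈ τ (p.1 ++ [A]) := by
      rintro ⟨p, hp, hyp⟩
      by_contra hno
      push Not at hno
      apply hcon
      simp only [Set.mem_iUnion]
      refine ⟨p, ?_, hp, hyp, hno⟩
      intro x hx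
      obtain ⟨k, hk, rfl⟩ := List.getElem_of_mem hx
      have := (hp k hk).1
      simpa [hk] using this
    choose A hA1 hA2 hA3 using step
    let nxt : {p // LegPos τ p ∧ y ∈ posSet τ p} → {p // LegPos τ p ∧ y ∈ posSet τ p} :=
      fun p => ⟨p.1 ++ [A p], ext _ _ p.2.1 (hA1 p) (hA2 p), Or.inr (hA3 p)⟩
    let P : ℕ → {p // LegPos τ p ∧ y ∈ posSet τ p} := fun n =>
      Nat.rec ⟨[], by intro k hk; simp at hk, Or.inl rfl⟩ (fun _ p => nxt p) n
    have hP : ∀ n, (P n).1 = List.ofFn fun i : Fin n => A (P i) := by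
      intro n
      induction n with
      | zero => simp [P]
      | succ n ih =>
        rw [List.ofFn_succ', List.concat_eq_append]
        simp only [Fin.val_castSucc, Fin.val_last]
        rw [← ih]
    have := hwin (fun n => A (P n)) ?_
    · have hmem : y ∈ Y ∩ ⋂ n, A (P n) := by
        refine ⟨hy, Set.mem_iInter.2 fun n => ?_⟩
        have := (legal _ (P (n+1)).2.1 (by simp [P, nxt])).2.2 (hA3 (P n))
        simpa [P, nxt] using this
      rw [this] at hmem
      exact hmem
    · intro n
      refine ⟨isOpen_of_mem_countableBasis (hA1 _), nonempty_of_mem_countableBasis (hA1 _), ?_⟩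
      rintro j rfl
      have h1 := hA2 (P (j+1))
      have h2 := hP (j+1)
      intro x hx
      rw [← h2]
      rcases h1 hx with h3 | h3
      · simp [P, nxt] at h3
      · exact h3
  refine IsMeagre.mono hcov ?_
  have hc : {l : List (Set ℝ) | ∀ x ∈ l, x ∈ countableBasis ℝ}.Countable := by
    rw [← Set.range_list_map_coe]
    have := (countable_countableBasis ℝ).to_subtype
    exact Set.countable_range _
  rw [isMeagre_iff_countable_union_isNowhereDense]
  refine ⟨N '' {l : List (Set ℝ) | ∀ x ∈ l, x ∈ countableBasis ℝ}, ?_, hc.image _, ?_⟩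
  · rintro _ ⟨p, -, rfl⟩; exact hN p
  · rw [Set.sUnion_image]

/-- Key connectedness fact. -/
theorem conn_key {J : Set ℝ} (hJ : IsOpen J) (hne : J.Nonempty) (hc : IsPreconnected J)
    {𝒱 : Set (Set ℝ)} (hd : IsDiscreteFam 𝒱) (hden : J ⊆ closure (⋃₀ 𝒱)) :
    ∃ A ∈ 𝒱, J ⊆ closure A := by
  obtain ⟨x, hx⟩ := hne
  obtain ⟨y, hyJ, A, hA, hyA⟩ := mem_closure_iff.1 (hden hx) J hJ hx
  refine ⟨A, hA, ?_⟩
  by_contra hcon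
  obtain ⟨z, hzJ, hz⟩ := Set.not_subset.1 hcon
  have dich : ∀ w, w ∈ interior ((⋃₀ 𝒱)ᶜ ∪ A) ∪ (closure A)ᶜ := by
    intro w
    obtain ⟨U, hU, hs⟩ := hd w
    by_cases hm : (A ∩ U).Nonempty
    · left
      rw [mem_interior_iff_mem_nhds]
      filter_upwards [hU] with t ht
      by_cases h : t ∈ ⋃₀ 𝒱
      · obtain ⟨B, hB, htB⟩ := h
        have : B = A := hs ⟨hB, t, htB, ht⟩ ⟨hA, hm⟩
        exact Or.inr (this ▸ htB)
      · exact Or.inl h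
    · right
      intro hw
      rw [mem_closure_iff_nhds] at hw
      exact hm (by rw [Set.inter_comm]; exact hw U hU)
  have hyu : y ∈ interior ((⋃₀ 𝒱)ᶜ ∪ A) := by
    rcases dich y with h | h
    · exact h
    · exact absurd (subset_closure hyA) h
  obtain ⟨t, htJ, ht1, ht2⟩ := hc _ _ isOpen_interior isClosed_closure.isOpen_compl
    (fun w _ => dich w) ⟨y, hyJ, hyu⟩ ⟨z, hzJ, hz⟩
  obtain ⟨s, ⟨hs1, hs2⟩, hs3⟩ := mem_closure_iff.1 (hden htJ) _
    (isOpen_interior.inter isClosed_closure.isOpen_compl) ⟨ht1, ht2⟩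
  rcases interior_subset hs1 with h | h
  · exact h hs3
  · exact hs2 (subset_closure h)

theorem G_to_MB {Y : Set ℝ} (h : TwoWinsGomega ℝ Y) : TwoWinsMB ℝ Y := by
  obtain ⟨τ, hτ⟩ := h
  have hJ : ∀ O : Set ℝ, ∃ J : Set ℝ, IsOpen J ∧ J.Nonempty ∧ IsPreconnected J ∧
      (IsOpen O → O.Nonempty → J ⊆ O) := by
    intro O
    by_cases h : IsOpen O ∧ O.Nonempty
    · obtain ⟨ho, x, hx⟩ := h
      obtain ⟨ε, hε, hb⟩ := Metric.isOpen_iff.1 ho x hx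
      exact ⟨Metric.ball x ε, Metric.isOpen_ball, ⟨x, Metric.mem_ball_self hε⟩,
        (convex_ball x ε).isPreconnected, fun _ _ => hb⟩
    · exact ⟨Set.univ, isOpen_univ, Set.univ_nonempty, isPreconnected_univ,
        fun h1 h2 => absurd ⟨h1, h2⟩ h⟩
  choose J hJo hJne hJc hJs using hJ
  let cov : Set ℝ → Set (Set ℝ) := fun O => {U | IsOpen U ∧ ¬ J O ⊆ closure U}
  have hcov : ∀ O, IsOpenCover (cov O) := by
    intro O
    refine ⟨fun U hU => hU.1, Set.eq_univ_of_forall fun x => ?_⟩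
    obtain ⟨y, hy, hyx⟩ : ∃ y ∈ J O, y ≠ x := by
      by_contra hcon
      push Not at hcon
      obtain ⟨z, hz⟩ := hJne O
      have : J O = {x} := Set.eq_singleton_iff_unique_mem.2 ⟨hcon z hz ▸ hz, hcon⟩
      have h2 := hJo O
      rw [this] at h2
      exact not_isOpen_singleton x h2
    refine ⟨Metric.ball x (dist y x / 2), ⟨Metric.isOpen_ball, fun hs => ?_⟩,
      Metric.mem_ball_self (half_pos (dist_pos.2 hyx))⟩
    have := Metric.closure_ball_subset_closedBall (hs hy)
    rw [Metric.mem_closedBall] at this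
    have := dist_pos.2 hyx
    linarith
  let τ' : List (Set ℝ) → Set ℝ := fun l =>
    J (l.getLastD ∅) \ closure (⋃₀ τ (l.map cov))
  have key : ∀ (O : ℕ → Set ℝ) (n : ℕ), τ' (List.ofFn fun i : Fin (n+1) => O i) =
      J (O n) \ closure (⋃₀ τ (List.ofFn fun i : Fin (n+1) => cov (O i))) := by
    intro O n
    simp only [τ', List.map_ofFn]
    congr 2
    rw [List.ofFn_succ', List.concat_eq_append]
    simp
  refine ⟨τ', ?_, ?_⟩
  · intro O n hO
    rw [key]
    obtain ⟨h1, h2, -⟩ := hO n le_rfl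
    refine ⟨(hJo _).sdiff isClosed_closure, ?_, Set.sdiff_subset.trans (hJs _ h1 h2)⟩
    by_contra hcon
    rw [Set.not_nonempty_iff_eq_empty, Set.sdiff_eq_empty] at hcon
    obtain ⟨hd, hr⟩ := (hτ (fun k => cov (O k)) (fun k => hcov _)).1 n
    obtain ⟨A, hA, hJA⟩ := conn_key (hJo _) (hJne _) (hJc _) hd hcon
    obtain ⟨-, U, hU, hAU⟩ := hr A hA
    exact hU.2 (hJA.trans (closure_mono hAU))
  · intro O hO
    rw [Set.eq_empty_iff_forall_notMem]
    rintro y ⟨hy, hyO⟩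
    obtain ⟨n, hn⟩ := Set.mem_iUnion.1 ((hτ (fun k => cov (O k)) (fun k => hcov _)).2 hy)
    have h1 := (hO (n+1)).2.2 n rfl (Set.mem_iInter.1 hyO (n+1))
    rw [key] at h1
    exact h1.2 (subset_closure hn)

theorem exists_cut {N : Set ℝ} (hi : interior N = ∅)
    {𝒰 : Set (Set ℝ)} (hU : IsOpenCover 𝒰) :
    ∃ D : Set ℝ, IsClosed D ∧ Disjoint N D ∧
      ∀ y, ∃ a ∈ D, ∃ b ∈ D, a < y ∧ y < b ∧ ∃ U ∈ 𝒰, Set.Icc a b ⊆ U := by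
  have hpt : ∀ l r : ℝ, l < r → ∃ c, l < c ∧ c < r ∧ c ∉ N := by
    intro l r hlr
    by_contra hcon
    push Not at hcon
    have : Set.Ioo l r ⊆ interior N :=
      interior_maximal (fun c hc => hcon c hc.1 hc.2) isOpen_Ioo
    rw [hi] at this
    exact (Set.nonempty_Ioo.2 hlr).ne_empty (Set.subset_empty_iff.1 this)
  have hloc : ∀ x : ℝ, ∃ a b : ℝ, x - 1 < a ∧ a < x ∧ x < b ∧ b < x + 1 ∧ a ∉ N ∧ b ∉ N ∧
      ∃ U ∈ 𝒰, Set.Icc a b ⊆ U := by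
    intro x
    have hx : x ∈ ⋃₀ 𝒰 := hU.2 ▸ Set.mem_univ x
    obtain ⟨U, hUU, hxU⟩ := hx
    obtain ⟨ε, hε, hb⟩ := Metric.isOpen_iff.1 (hU.1 U hUU) x hxU
    have hm : 0 < min ε 1 := lt_min hε one_pos
    obtain ⟨a, ha1, ha2, ha3⟩ := hpt (x - min ε 1) x (by linarith)
    obtain ⟨b, hb1, hb2, hb3⟩ := hpt x (x + min ε 1) (by linarith)
    have h1 := min_le_left ε 1
    have h2 := min_le_right ε 1
    refine ⟨a, b, by linarith, ha2, hb1, by linarith, ha3, hb3, U, hUU, fun t ht => hb ?_⟩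
    rw [Metric.mem_ball, Real.dist_eq, abs_lt]
    constructor <;> linarith [ht.1, ht.2]
  choose a b h1 h2 h3 h4 h5 h6 h7 using hloc
  have hfin : ∀ n : ℤ, ∃ t : Finset ℝ, (∀ x ∈ t, x ∈ Set.Icc (n:ℝ) (n+1)) ∧
      Set.Icc (n:ℝ) (n+1) ⊆ ⋃ x ∈ t, Set.Ioo (a x) (b x) := fun n =>
    isCompact_Icc.elim_nhds_subcover (fun x => Set.Ioo (a x) (b x))
      (fun x _ => Ioo_mem_nhds (h2 x) (h3 x))
  choose t ht1 ht2 using hfin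
  have hDn : ∀ n, ∀ c ∈ a '' (t n) ∪ b '' (t n), c ∉ N ∧ (n:ℝ) - 1 ≤ c ∧ c ≤ n + 2 := by
    rintro n c (⟨x, hx, rfl⟩ | ⟨x, hx, rfl⟩) <;>
    · have := ht1 n x hx
      refine ⟨by first | exact h5 x | exact h6 x, ?_, ?_⟩ <;>
        linarith [this.1, this.2, h1 x, h2 x, h3 x, h4 x]
  refine ⟨⋃ n : ℤ, (a '' (t n) ∪ b '' (t n)), ?_, ?_, ?_⟩
  · apply LocallyFinite.isClosed_iUnion
    · intro x
      refine ⟨Set.Ioo (x-1) (x+1), Ioo_mem_nhds (by linarith) (by linarith), ?_⟩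
      refine (Set.finite_Icc (⌊x⌋ - 4) (⌊x⌋ + 4)).subset ?_
      rintro n ⟨c, hc, hc'⟩
      obtain ⟨-, e1, e2⟩ := hDn n c hc
      have f1 := Int.floor_le x
      have f2 := Int.lt_floor_add_one x
      constructor
      · have : ((⌊x⌋ - 4 : ℤ) : ℝ) ≤ n := by push_cast; linarith [hc'.1, hc'.2]
        exact_mod_cast this
      · have : (n : ℝ) ≤ ((⌊x⌋ + 4 : ℤ) : ℝ) := by push_cast; linarith [hc'.1, hc'.2]
        exact_mod_cast this
    · intro n
      exact (((t n).finite_toSet.image a).union ((t n).finite_toSet.image b)).isClosed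
  · rw [Set.disjoint_left]
    intro c hcN hc
    obtain ⟨n, hn⟩ := Set.mem_iUnion.1 hc
    exact (hDn n c hn).1 hcN
  · intro y
    have := ht2 ⌊y⌋ ⟨Int.floor_le y, (Int.lt_floor_add_one y).le⟩
    simp only [Set.mem_iUnion] at this
    obtain ⟨x, hx, hy⟩ := this
    exact ⟨a x, Set.mem_iUnion.2 ⟨⌊y⌋, Or.inl ⟨x, hx, rfl⟩⟩, b x,
      Set.mem_iUnion.2 ⟨⌊y⌋, Or.inr ⟨x, hx, rfl⟩⟩, hy.1, hy.2, h7 x⟩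

theorem cover_nd {N : Set ℝ} (hN : IsClosed N) (hi : interior N = ∅)
    {𝒰 : Set (Set ℝ)} (hU : IsOpenCover 𝒰) :
    ∃ 𝒱 : Set (Set ℝ), LegalTwoMove 𝒰 𝒱 ∧ N ⊆ ⋃₀ 𝒱 := by
  obtain ⟨D, hD, hND, hcut⟩ := exists_cut hi hU
  obtain ⟨G, H, hG, hH, hNG, hDH, hGH⟩ := normal_separation hN hD hND
  refine ⟨{V | ∃ x ∈ Dᶜ, V = connectedComponentIn Dᶜ x ∩ G}, ⟨?_, ?_⟩, ?_⟩
  · intro x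
    by_cases hx : x ∈ D
    · refine ⟨H, hH.mem_nhds (hDH hx), ?_⟩
      rintro _ ⟨⟨z, hz, rfl⟩, w, hw1, hw2⟩
      exact (Set.disjoint_left.1 hGH hw1.2 hw2).elim
    · refine ⟨connectedComponentIn Dᶜ x, (hD.isOpen_compl.connectedComponentIn).mem_nhds
        (mem_connectedComponentIn hx), ?_⟩
      have : ∀ A, (∃ z ∈ Dᶜ, A = connectedComponentIn Dᶜ z ∩ G) ∧
          (A ∩ connectedComponentIn Dᶜ x).Nonempty → A = connectedComponentIn Dᶜ x ∩ G := by
        rintro _ ⟨⟨z, hz, rfl⟩, w, hw1, hw2⟩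
        rw [connectedComponentIn_eq hw1.1, connectedComponentIn_eq hw2]
      intro A hA B hB
      rw [this A hA, this B hB]
  · rintro _ ⟨x, hx, rfl⟩
    refine ⟨hD.isOpen_compl.connectedComponentIn.inter hG, ?_⟩
    obtain ⟨a, ha, b, hb, hax, hxb, U, hU, hs⟩ := hcut x
    refine ⟨U, hU, fun y hy => hs ?_⟩
    have hoc := (isPreconnected_connectedComponentIn (F := Dᶜ) (x := x)).ordConnected
    have hxx := mem_connectedComponentIn hx
    have hsub := connectedComponentIn_subset Dᶜ x
    constructor
    · by_contra hlt
      exact hsub (hoc.out hy.1 hxx ⟨(not_le.1 hlt).le, hax.le⟩) ha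
    · by_contra hlt
      exact hsub (hoc.out hxx hy.1 ⟨hxb.le, (not_le.1 hlt).le⟩) hb
  · intro x hx
    have hxD : x ∈ Dᶜ := Set.disjoint_left.1 hND hx
    exact ⟨_, ⟨x, hxD, rfl⟩, mem_connectedComponentIn hxD, hNG hx⟩

theorem meagre_to_G {Y : Set ℝ} (h : IsMeagre Y) : TwoWinsGomega ℝ Y := by
  obtain ⟨N, hN, hY⟩ := meagre_seq h
  have hF : ∀ (n : ℕ) (𝒰 : Set (Set ℝ)), ∃ 𝒱 : Set (Set ℝ),
      IsOpenCover 𝒰 → LegalTwoMove 𝒰 𝒱 ∧ N n ⊆ ⋃₀ 𝒱 := by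
    intro n 𝒰
    by_cases hU : IsOpenCover 𝒰
    · obtain ⟨𝒱, h𝒱⟩ := cover_nd (hN n).1 (hN n).2 hU
      exact ⟨𝒱, fun _ => h𝒱⟩
    · exact ⟨∅, fun h => absurd h hU⟩
  choose F hF using hF
  let τ : List (Set (Set ℝ)) → Set (Set ℝ) := fun l => F (l.length - 1) (l.getLastD ∅)
  have key : ∀ (U : ℕ → Set (Set ℝ)) (n : ℕ),
      τ (List.ofFn fun i : Fin (n+1) => U i) = F n (U n) := by
    intro U n
    simp only [τ, List.length_ofFn, Nat.add_sub_cancel]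
    rw [List.ofFn_succ', List.concat_eq_append]
    simp
  refine ⟨τ, fun U hU => ⟨fun n => ?_, fun y hy => ?_⟩⟩
  · rw [key]; exact (hF n _ (hU n)).1
  · obtain ⟨n, hn⟩ := Set.mem_iUnion.1 (hY hy)
    refine Set.mem_iUnion.2 ⟨n, ?_⟩
    rw [key]; exact (hF n _ (hU n)).2 hn

/-- For `Y ⊆ ℝ`: TWO wins `G^ω_d(𝒪,𝒪_Y)` iff `Y` is meager in `ℝ` iff
TWO wins the Banach–Mazur game `MB(Y,ℝ)`. -/
theorem statement13 (Y : Set ℝ) :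
    (TwoWinsGomega ℝ Y ↔ IsMeagre Y) ∧ (IsMeagre Y ↔ TwoWinsMB ℝ Y) := by
  exact ⟨⟨fun h => MB_to_meagre (G_to_MB h), meagre_to_G⟩, meagre_to_MB, MB_to_meagre⟩

end SSG
end

section
/- Let X be a metric space and let Y be a subspace of X. If player TWO has a winning strategy in the game G^1_d(𝒪,𝒪_Y) on X, then Y is contained in a closed, strongly zero-dimensional subset of X. -/
namespace SSG

/-- If `X` is a metric space and TWO has a winning strategy in
`G^1_d(𝒪,𝒪_Y)` on `X`, then `Y` is contained in a closed strongly zero-dimensional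
subset of `X`. -/
theorem statement14 {X : Type*} [MetricSpace X] (Y : Set X) (h : TwoWinsGone X Y) :
    ∃ C : Set X, IsClosed C ∧ StronglyZeroDim ↥C ∧ Y ⊆ C := by
  refine ⟨closure Y, isClosed_closure, ?_, subset_closure⟩
  intro 𝒰 _ h𝒰
  obtain ⟨𝒱, ⟨hd, hr⟩, hY⟩ := h
    {W : Set X | IsOpen W ∧ ((Subtype.val ⁻¹' closure W : Set (closure Y)) = ∅ ∨
      ∃ U ∈ 𝒰, (Subtype.val ⁻¹' closure W : Set (closure Y)) ⊆ U)} (by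
    refine ⟨fun U hU => hU.1, Set.eq_univ_of_forall fun x => ?_⟩
    have key : ∀ O : Set X, IsOpen O → x ∈ O → ∃ W, IsOpen W ∧ x ∈ W ∧ closure W ⊆ O := by
      intro O hO hx
      obtain ⟨t, ht, htc, hto⟩ := exists_mem_nhds_isClosed_subset (hO.mem_nhds hx)
      refine ⟨interior t, isOpen_interior, mem_interior_iff_mem_nhds.2 ht, ?_⟩
      exact (closure_minimal interior_subset htc).trans hto
    by_cases hx : x ∈ closure Y
    · have : (⟨x, hx⟩ : closure Y) ∈ ⋃₀ 𝒰 := by rw [h𝒰.2]; trivial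
      obtain ⟨U, hU, hxU⟩ := this
      obtain ⟨O, hO, rfl⟩ := isOpen_induced_iff.1 (h𝒰.1 U hU)
      obtain ⟨W, hW, hxW, hWO⟩ := key O hO hxU
      exact ⟨W, ⟨hW, Or.inr ⟨_, hU, Set.preimage_mono hWO⟩⟩, hxW⟩
    · obtain ⟨W, hW, hxW, hWO⟩ := key (closure Y)ᶜ isClosed_closure.isOpen_compl hx
      refine ⟨W, ⟨hW, Or.inl ?_⟩, hxW⟩
      ext y
      simp only [Set.mem_preimage, Set.mem_empty_iff_false, iff_false]
      exact fun hy => hWO hy y.2)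
  -- closures are still discrete
  have hd' : ∀ x : X, ∃ U, IsOpen U ∧ x ∈ U ∧ ∀ A ∈ 𝒱, ∀ B ∈ 𝒱,
      (closure A ∩ U).Nonempty → (closure B ∩ U).Nonempty → A = B := by
    intro x
    obtain ⟨U, hU, hs⟩ := hd x
    obtain ⟨O, hOU, hO, hx⟩ := mem_nhds_iff.1 hU
    refine ⟨O, hO, hx, ?_⟩
    rintro A hA B hB ⟨a, ha, haO⟩ ⟨b, hb, hbO⟩
    obtain ⟨a', h1, h2⟩ := mem_closure_iff.1 ha O hO haO
    obtain ⟨b', h3, h4⟩ := mem_closure_iff.1 hb O hO hbO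
    exact hs ⟨hA, a', h2, hOU h1⟩ ⟨hB, b', h4, hOU h3⟩
  have hcov : ∀ x ∈ closure Y, ∃ V ∈ 𝒱, x ∈ closure V := by
    intro x hx
    obtain ⟨U, hU, hxU, hs⟩ := hd' x
    obtain ⟨y, hyU, hyY⟩ := mem_closure_iff.1 hx U hU hxU
    obtain ⟨V, hV, hyV⟩ := hY hyY
    refine ⟨V, hV, mem_closure_iff.2 fun O hO hxO => ?_⟩
    obtain ⟨z, ⟨hzO, hzU⟩, hzY⟩ := mem_closure_iff.1 hx (O ∩ U) (hO.inter hU) ⟨hxO, hxU⟩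
    obtain ⟨V', hV', hzV⟩ := hY hzY
    have := hs V hV V' hV' ⟨y, subset_closure hyV, hyU⟩ ⟨z, subset_closure hzV, hzU⟩
    subst this
    exact ⟨z, hzO, hzV⟩
  refine ⟨{S | S.Nonempty ∧ ∃ V ∈ 𝒱, S = Subtype.val ⁻¹' closure V}, ?_, ?_, ?_⟩
  · rintro S ⟨hne, V, hV, rfl⟩
    constructor
    · rw [isOpen_iff_mem_nhds]
      intro x hx
      obtain ⟨U, hU, hxU, hs⟩ := hd' x
      refine Filter.mem_of_superset ((hU.preimage continuous_subtype_val).mem_nhds hxU) ?_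
      intro y hy
      obtain ⟨V', hV', hyV⟩ := hcov y y.2
      have := hs V hV V' hV' ⟨x, hx, hxU⟩ ⟨y, hyV, hy⟩
      subst this
      exact hyV
    · obtain ⟨_, W, ⟨_, hW⟩, hVW⟩ := hr V hV
      have hsub : (Subtype.val ⁻¹' closure V : Set (closure Y)) ⊆ Subtype.val ⁻¹' closure W :=
        Set.preimage_mono (closure_mono hVW)
      rcases hW with hW | ⟨U, hU, hWU⟩
      · exact absurd (hW ▸ hne.mono hsub) Set.not_nonempty_empty
      · exact ⟨U, hU, hsub.trans hWU⟩
  · rintro S ⟨_, V, hV, rfl⟩ T ⟨_, V', hV', rfl⟩ hne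
    rw [Set.disjoint_left]
    intro x hx hx'
    obtain ⟨U, hU, hxU, hs⟩ := hd' x
    exact hne (by rw [hs V hV V' hV' ⟨x, hx, hxU⟩ ⟨x, hx', hxU⟩])
  · refine Set.eq_univ_of_forall fun x => ?_
    obtain ⟨V, hV, hx⟩ := hcov x x.2
    exact ⟨_, ⟨⟨x, hx⟩, V, hV, rfl⟩, hx⟩

end SSG
end

section
/- On the real line ℝ, player TWO has a winning strategy in the game G^ω_d(𝒪,𝒪_ℚ), but TWO does not have a winning strategy in the game G^1_d(𝒪,𝒪_ℚ), where ℚ is the set of rational numbers. -/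
namespace SSG

/-- On the real line TWO has a winning strategy in `G^ω_d(𝒪,𝒪_ℚ)` but
not in `G^1_d(𝒪,𝒪_ℚ)`. -/
theorem statement15 :
    TwoWinsGomega ℝ (Set.range ((↑) : ℚ → ℝ)) ∧
    ¬ TwoWinsGone ℝ (Set.range ((↑) : ℚ → ℝ)) := by
  refine ⟨?_, ?_⟩
  · obtain ⟨q, hq⟩ := exists_surjective_nat ℚ
    refine ⟨fun h => {Classical.epsilon
      (fun A : Set ℝ => A ∈ h.getLastD ∅ ∧ ((q (h.length - 1) : ℚ) : ℝ) ∈ A)}, ?_⟩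
    intro U hU
    have key : ∀ n : ℕ, Classical.epsilon (fun A : Set ℝ =>
        A ∈ (List.ofFn fun i : Fin (n+1) => U i).getLastD ∅ ∧
        ((q ((List.ofFn fun i : Fin (n+1) => U i).length - 1) : ℚ) : ℝ) ∈ A) ∈ U n ∧
        ((q n : ℚ) : ℝ) ∈ Classical.epsilon (fun A : Set ℝ =>
        A ∈ (List.ofFn fun i : Fin (n+1) => U i).getLastD ∅ ∧
        ((q ((List.ofFn fun i : Fin (n+1) => U i).length - 1) : ℚ) : ℝ) ∈ A) := by
      intro n
      have h1 : (List.ofFn fun i : Fin (n+1) => U i).getLastD ∅ = U n := by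
        rw [List.ofFn_succ', List.concat_eq_append]
        simp
      have h2 : (List.ofFn fun i : Fin (n+1) => U i).length - 1 = n := by simp
      rw [h1, h2]
      apply Classical.epsilon_spec (p := fun A : Set ℝ => A ∈ U n ∧ ((q n : ℚ) : ℝ) ∈ A)
      have : ((q n : ℚ) : ℝ) ∈ ⋃₀ U n := by rw [(hU n).2]; trivial
      obtain ⟨A, hA, hx⟩ := this
      exact ⟨A, hA, hx⟩
    refine ⟨fun n => ⟨?_, ?_⟩, ?_⟩
    · intro x
      refine ⟨Set.univ, Filter.univ_mem, ?_⟩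
      rintro A ⟨hA, -⟩ B ⟨hB, -⟩
      exact hA.trans hB.symm
    · rintro V rfl
      exact ⟨(hU n).1 _ (key n).1, _, (key n).1, subset_rfl⟩
    · rintro _ ⟨r, rfl⟩
      obtain ⟨n, rfl⟩ := hq r
      exact Set.mem_iUnion.2 ⟨n, Set.mem_sUnion.2 ⟨_, rfl, (key n).2⟩⟩
  · intro H
    obtain ⟨𝒱, ⟨hd, hV⟩, hc⟩ := H (Set.range fun x : ℝ => Metric.ball x 1) ⟨by
        rintro _ ⟨x, rfl⟩
        exact Metric.isOpen_ball, by
        refine Set.eq_univ_of_forall fun x => ⟨_, ⟨x, rfl⟩, ?_⟩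
        simp⟩
    obtain ⟨A, hA, h0⟩ := hc ⟨0, rfl⟩
    have hcl : IsClopen (closure A) := by
      refine ⟨isClosed_closure, isOpen_iff_mem_nhds.2 fun x hx => ?_⟩
      obtain ⟨W, hW, hs⟩ := hd x
      obtain ⟨O, hOW, hO, hxO⟩ := mem_nhds_iff.1 hW
      refine Filter.mem_of_superset (hO.mem_nhds hxO) fun y hy => ?_
      have hAW : (A ∩ W).Nonempty := by
        obtain ⟨z, hz, hz'⟩ := mem_closure_iff.1 hx O hO hxO
        exact ⟨z, hz', hOW hz⟩
      rw [mem_closure_iff]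
      intro P hP hyP
      obtain ⟨r, hr⟩ := Rat.denseRange_cast.exists_mem_open (hP.inter hO) ⟨y, hyP, hy⟩
      obtain ⟨B, hB, hrB⟩ := hc ⟨r, rfl⟩
      have : B = A := hs ⟨hB, _, hrB, hOW hr.2⟩ ⟨hA, hAW⟩
      exact ⟨_, hr.1, this ▸ hrB⟩
    have hu : closure A = Set.univ := hcl.eq_univ ⟨_, subset_closure h0⟩
    obtain ⟨-, _, ⟨x, rfl⟩, hAx⟩ := hV A hA
    have h2 : closure A ⊆ Metric.closedBall x 1 :=
      closure_minimal (hAx.trans Metric.ball_subset_closedBall) Metric.isClosed_closedBall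
    have h3 : x + 2 ∈ Metric.closedBall x 1 := h2 (hu ▸ Set.mem_univ _)
    rw [Metric.mem_closedBall, Real.dist_eq] at h3
    norm_num at h3

end SSG
end

section
/- Let 0 ≤ a < b ≤ 1 be real numbers and set L = b − a. Let 𝒰 be a cover of the closed interval [a,b] by sets open in the space [0,1]. Then there is a finite family 𝒱 of open subsets of [0,1], discrete in [0,1], such that each member of 𝒱 is contained in some member of 𝒰, ⋃𝒱 ⊆ [a,b], and [a,b] \ ⋃𝒱 is a union of finitely many pairwise disjoint closed intervals whose lengths add up to at most L/2. -/
namespace SSG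

/-- the interval-splitting lemma on `[0,1]`. For `0 ≤ a < b ≤ 1` and any
cover `𝒰` of `[a,b]` by sets open in `[0,1]`, there is a finite discrete family `𝒱` of
open subsets of `[0,1]` refining `𝒰` with `⋃𝒱 ⊆ [a,b]`, such that `[a,b] \ ⋃𝒱` is a
union of finitely many pairwise disjoint closed intervals whose lengths add up to at
most `(b-a)/2`. -/
theorem statement16 (a b : ℝ) (ha : 0 ≤ a) (hab : a < b) (hb : b ≤ 1)
    (𝒰 : Set (Set (Set.Icc (0:ℝ) 1)))
    (hopen : ∀ U ∈ 𝒰, IsOpen U)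
    (hcover : {x : Set.Icc (0:ℝ) 1 | a ≤ x.1 ∧ x.1 ≤ b} ⊆ ⋃₀ 𝒰) :
    ∃ 𝒱 : Set (Set (Set.Icc (0:ℝ) 1)), 𝒱.Finite ∧
      (∀ V ∈ 𝒱, IsOpen V) ∧ IsDiscreteFam 𝒱 ∧
      (∀ V ∈ 𝒱, ∃ U ∈ 𝒰, V ⊆ U) ∧
      ⋃₀ 𝒱 ⊆ {x : Set.Icc (0:ℝ) 1 | a ≤ x.1 ∧ x.1 ≤ b} ∧
      ∃ (m : ℕ) (c d : Fin m → ℝ), (∀ i, c i ≤ d i) ∧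
        (∀ i j, i ≠ j →
          Disjoint {x : Set.Icc (0:ℝ) 1 | c i ≤ x.1 ∧ x.1 ≤ d i}
                   {x : Set.Icc (0:ℝ) 1 | c j ≤ x.1 ∧ x.1 ≤ d j}) ∧
        ({x : Set.Icc (0:ℝ) 1 | a ≤ x.1 ∧ x.1 ≤ b} \ ⋃₀ 𝒱 =
          ⋃ i : Fin m, {x : Set.Icc (0:ℝ) 1 | c i ≤ x.1 ∧ x.1 ≤ d i}) ∧
        ∑ i : Fin m, (d i - c i) ≤ (b - a) / 2 := by
  obtain ⟨δ, hδ, hL⟩ := lebesgue_number_lemma_of_metric_sUnion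
    (s := {x : Set.Icc (0:ℝ) 1 | a ≤ x.1 ∧ x.1 ≤ b})
    (IsClosed.isCompact ((isClosed_le continuous_const continuous_subtype_val).inter
      (isClosed_le continuous_subtype_val continuous_const))) hopen hcover
  obtain ⟨N, hN⟩ := exists_nat_gt ((b - a) / δ)
  have hNpos : (0:ℝ) < N := lt_of_le_of_lt (div_nonneg (by linarith) hδ.le) hN
  obtain ⟨h, hh⟩ : ∃ h, h = (b - a) / N := ⟨_, rfl⟩
  have hpos : 0 < h := by rw [hh]; exact div_pos (by linarith) hNpos
  have hNh : N * h = b - a := by rw [hh]; field_simp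
  have hhδ : h < δ := by
    rw [div_lt_iff₀ hδ] at hN
    rw [hh, div_lt_iff₀ hNpos]; linarith
  let V : Fin N → Set (Set.Icc (0:ℝ) 1) := fun k =>
    {x | a + (k:ℕ) * h < x.1 ∧ x.1 < a + (k:ℕ) * h + h / 2}
  have hstep : ∀ i j : ℕ, i < j → (i:ℝ) * h + h ≤ j * h := by
    intro i j hij
    have : (i:ℝ) + 1 ≤ j := by exact_mod_cast hij
    nlinarith
  have hnn : ∀ i : ℕ, 0 ≤ (i:ℝ) * h := fun i => by positivity
  have hle : ∀ k : ℕ, k ≤ N → (k:ℝ) * h ≤ b - a := by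
    intro k hk
    rw [← hNh]
    have : (k:ℝ) ≤ N := by exact_mod_cast hk
    nlinarith
  refine ⟨Set.range V, Set.finite_range V, ?_, ?_, ?_, ?_, N + 1,
    fun i => if (i:ℕ) = 0 then a else a + (i:ℕ) * h - h / 2, fun i => a + (i:ℕ) * h, ?_, ?_, ?_, ?_⟩
  · rintro _ ⟨k, rfl⟩
    exact (isOpen_lt continuous_const continuous_subtype_val).inter
      (isOpen_lt continuous_subtype_val continuous_const)
  · intro x
    refine ⟨Metric.ball x (h/4), Metric.ball_mem_nhds x (by linarith), ?_⟩
    rintro _ ⟨⟨k, rfl⟩, y, ⟨hy1, hy2⟩, hy⟩ _ ⟨⟨l, rfl⟩, z, ⟨hz1, hz2⟩, hz⟩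
    rw [Metric.mem_ball, Subtype.dist_eq, Real.dist_eq, abs_lt] at hy hz
    have : k = l := by
      rcases lt_trichotomy (k:ℕ) l with hkl | hkl | hkl
      · have := hstep _ _ hkl
        linarith
      · exact Fin.ext hkl
      · have := hstep _ _ hkl
        linarith
    rw [this]
  · rintro _ ⟨k, rfl⟩
    have h1 := hnn k
    have h2 := hle k k.2.le
    obtain ⟨U, hU, hs⟩ := hL ⟨a + (k:ℕ) * h, by constructor <;> linarith⟩
      ⟨by simpa using h1, by show a + (k:ℕ) * h ≤ b; linarith⟩
    refine ⟨U, hU, fun x hx => hs ?_⟩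
    have hx1 := hx.1
    have hx2 := hx.2
    rw [Metric.mem_ball, Subtype.dist_eq, Real.dist_eq, abs_lt]
    constructor <;> simp only <;> linarith
  · rintro x ⟨_, ⟨k, rfl⟩, hx1, hx2⟩
    have h1 := hnn k
    have h2 := hle (k+1) k.2
    push_cast at h2
    constructor <;> linarith
  · intro i
    have := hnn i
    dsimp only
    split_ifs <;> linarith
  · have key : ∀ i j : Fin (N+1), (i:ℕ) < j → ∀ x : ℝ, x ≤ a + (i:ℕ) * h →
        (if (j:ℕ) = 0 then a else a + (j:ℕ) * h - h / 2) ≤ x → False := by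
      intro i j hij x h1 h2
      rw [if_neg (by omega)] at h2
      have := hstep _ _ hij
      linarith
    intro i j hij
    rw [Set.disjoint_left]
    rintro x ⟨h1, h2⟩ ⟨h3, h4⟩
    rcases lt_or_gt_of_ne (fun e => hij (Fin.ext e) : (i:ℕ) ≠ j) with hl | hl
    · exact key i j hl _ h2 h3
    · exact key j i hl _ h4 h1
  · ext x
    simp only [Set.mem_diff, Set.mem_setOf_eq, Set.mem_iUnion]
    constructor
    · rintro ⟨⟨h1, h2⟩, h3⟩
      have ht : (x.1 - a) / h ≤ N := by rw [div_le_iff₀ hpos]; linarith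
      have hk := Nat.ceil_le.2 ht
      have hk2 := Nat.le_ceil ((x.1 - a) / h)
      have hk3 := Nat.ceil_lt_add_one (a := (x.1 - a) / h) (div_nonneg (by linarith) hpos.le)
      generalize ⌈(x.1 - a) / h⌉₊ = k at hk hk2 hk3
      rw [div_le_iff₀ hpos] at hk2
      refine ⟨⟨k, by omega⟩, ?_, by simp only; linarith⟩
      dsimp only
      split_ifs with h0
      · exact h1
      · obtain ⟨l, rfl⟩ := Nat.exists_eq_succ_of_ne_zero h0
        by_contra hc
        apply h3
        push_cast at hk3 hc
        have hk4 : (l:ℝ) < (x.1 - a) / h := by linarith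
        rw [lt_div_iff₀ hpos] at hk4
        refine ⟨_, ⟨⟨l, by omega⟩, rfl⟩, ?_, ?_⟩ <;> simp only <;> linarith
    · rintro ⟨i, h1, h2⟩
      have h5 := hle i (by omega)
      have h6 : a ≤ x.1 := by
        split_ifs at h1 with h0
        · exact h1
        · have := hstep 0 i (by omega)
          push_cast at this
          linarith
      refine ⟨⟨h6, by linarith⟩, ?_⟩
      rintro ⟨_, ⟨k, rfl⟩, h3, h4⟩
      rcases lt_or_ge (k:ℕ) i with hl | hl
      · rw [if_neg (by omega)] at h1
        have := hstep _ _ hl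
        linarith
      · have : ((i:ℕ):ℝ) ≤ (k:ℕ) := by exact_mod_cast hl
        nlinarith
  · rw [Fin.sum_univ_succ]
    have : ∀ i : Fin N, (a + ((i.succ : Fin (N+1)):ℕ) * h -
      (if ((i.succ : Fin (N+1)):ℕ) = 0 then a else a + ((i.succ : Fin (N+1)):ℕ) * h - h / 2)) = h / 2 := by
      intro i
      rw [if_neg (by simp)]; ring
    simp only [this]
    simp
    linarith

end SSG
end
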